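/- arXiv:2601.05340 — 4 statements merged into one kernel-verified Lean document; each statement's English description precedes it below -/
import Mathlib

section
/- Let N, n_c, n_v be positive integers and let H_0, …, H_{N−1} be real n_c × n_v matrices. Let H̄ be the real (N·n_c) × (N·n_v) block matrix indexed by (Fin N × Fin n_c) × (Fin N × Fin n_v) with H̄_{(i,r),(j,s)} = (H_{(i−j) mod N})_{r,s} (the block-circulant matrix whose first block column is H_0, …, H_{N−1}), and for ρ ∈ ℂ let H(ρ) = Σ_{t=0}^{N−1} ρ^t · H_t, an n_c × n_v complex matrix. Then a complex number λ is an eigenvalue of (the complexification of) H̄ · H̄ᵀ if and only if there exists ρ ∈ ℂ with ρ^N = 1 such that λ is an eigenvalue of H(ρ) · H(ρ)^*, where H(ρ)^* denotes the conjugate transpose of H(ρ). -/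
open Matrix

/-!
For an `N`-th root of unity `ρ`, the evaluation map `F ρ : (u_i)_i ↦ ∑ i, ρ ^ i • u_i` turns the
cyclic convolution `H̄` into multiplication by `H(ρ)`, and `H̄ᵀ` into multiplication by `H(ρ)ᴴ`
(because `conj ρ = ρ⁻¹`). Hence `F ρ (lam - H̄ H̄ᵀ) = (lam - H(ρ) H(ρ)ᴴ) F ρ`. Each `F ρ` is
surjective, so invertibility of `lam - H̄ H̄ᵀ` passes to every `lam - H(ρ) H(ρ)ᴴ`; the maps `F ρ` are
jointly injective (a Vandermonde argument), so invertibility of all the `lam - H(ρ) H(ρ)ᴴ` passes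
back to `lam - H̄ H̄ᵀ`.
-/

/-- The matrix of the evaluation (discrete Fourier) map `(u_i)_i ↦ ∑ i, ρ ^ i • u_i` from `N` blocks
of length `k` to one block of length `k`. -/
def fourierRow (N k : ℕ) (ρ : ℂ) : Matrix (Fin k) (Fin N × Fin k) ℂ :=
  fun r p => if p.2 = r then ρ ^ (p.1 : ℕ) else 0

lemma fourierRow_mulVec (N k : ℕ) (ρ : ℂ) (u : Fin N × Fin k → ℂ) (r : Fin k) :
    (fourierRow N k ρ *ᵥ u) r = ∑ i : Fin N, ρ ^ (i : ℕ) * u (i, r) := by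
  simp [fourierRow, Matrix.mulVec, dotProduct, Fintype.sum_prod_type]

lemma fourierRow_mul_apply {N k l : ℕ} (ρ : ℂ) (B : Matrix (Fin N × Fin k) (Fin N × Fin l) ℂ)
    (r : Fin k) (q : Fin N × Fin l) :
    (fourierRow N k ρ * B) r q = ∑ i : Fin N, ρ ^ (i : ℕ) * B (i, r) q := by
  simp [fourierRow, Matrix.mul_apply, Fintype.sum_prod_type]

lemma mul_fourierRow_apply {N k l : ℕ} (ρ : ℂ) (B : Matrix (Fin k) (Fin l) ℂ)
    (r : Fin k) (q : Fin N × Fin l) :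
    (B * fourierRow N l ρ) r q = B r q.2 * ρ ^ (q.1 : ℕ) := by
  simp [fourierRow, Matrix.mul_apply]

lemma pow_fin_add {N : ℕ} {ρ : ℂ} (hρ : ρ ^ N = 1) (a b : Fin N) :
    ρ ^ ((a + b : Fin N) : ℕ) = ρ ^ (a : ℕ) * ρ ^ (b : ℕ) := by
  rw [Fin.val_add, ← pow_eq_pow_mod _ hρ, pow_add]

lemma fourierRow_surjective {N k : ℕ} [NeZero N] (ρ : ℂ) (v : Fin k → ℂ) :
    ∃ u, fourierRow N k ρ *ᵥ u = v := by
  refine ⟨fun p => if p.1 = 0 then v p.2 else 0, ?_⟩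
  ext r
  simp [fourierRow_mulVec]

/-- The evaluations at all `N`-th roots of unity determine a vector: the powers of a primitive root
are distinct nodes, so their Vandermonde matrix is nonsingular. -/
lemma fourierRow_jointly_injective {N k : ℕ} [NeZero N] (u : Fin N × Fin k → ℂ)
    (h : ∀ ρ : ℂ, ρ ^ N = 1 → fourierRow N k ρ *ᵥ u = 0) : u = 0 := by
  have hζ := Complex.isPrimitiveRoot_exp N (NeZero.ne N)
  set ζ := Complex.exp (2 * Real.pi * Complex.I / N)
  have hinj : Function.Injective (fun j : Fin N => ζ ^ (j : ℕ)) := fun a b hab =>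
    Fin.ext (hζ.pow_inj a.2 b.2 hab)
  ext ⟨i, r⟩
  have := Matrix.eq_zero_of_forall_index_sum_pow_mul_eq_zero (v := fun i => u (i, r)) hinj
    (fun j => by
      have h1 := congrFun (h (ζ ^ (j : ℕ)) (by rw [← pow_mul, mul_comm, pow_mul, hζ.pow_eq_one,
        one_pow])) r
      rw [fourierRow_mulVec] at h1
      simpa using h1)
  exact congrFun this i

/-- The block-circulant matrix with first block column `B 0, …, B (N - 1)`. -/
def blockCirculant {N k l : ℕ} (B : Fin N → Matrix (Fin k) (Fin l) ℂ) :
    Matrix (Fin N × Fin k) (Fin N × Fin l) ℂ :=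
  fun p q => B (p.1 - q.1) p.2 q.2

lemma fourierRow_mul_circulant {N k l : ℕ} [NeZero N] {ρ : ℂ} (hρ : ρ ^ N = 1)
    (B : Fin N → Matrix (Fin k) (Fin l) ℂ) :
    fourierRow N k ρ * blockCirculant B =
      (∑ t : Fin N, ρ ^ (t : ℕ) • B t) * fourierRow N l ρ := by
  ext r ⟨j, s⟩
  rw [fourierRow_mul_apply, mul_fourierRow_apply, Matrix.sum_apply, Finset.sum_mul,
    ← Equiv.sum_comp (Equiv.addRight j)]
  refine Finset.sum_congr rfl fun t _ => ?_
  simp [pow_fin_add hρ, blockCirculant]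
  ring

lemma fourierRow_mul_circulant_conjTranspose {N k l : ℕ} [NeZero N] {ρ : ℂ} (hρ : ρ ^ N = 1)
    (B : Fin N → Matrix (Fin k) (Fin l) ℂ) :
    fourierRow N l ρ * (blockCirculant B)ᴴ =
      (∑ t : Fin N, ρ ^ (t : ℕ) • B t)ᴴ * fourierRow N k ρ := by
  have hc : star ρ * ρ = 1 := by
    have := Complex.norm_eq_one_of_pow_eq_one hρ (NeZero.ne N)
    simpa [this] using Complex.conj_mul' ρ
  ext s ⟨i, r⟩
  rw [fourierRow_mul_apply, mul_fourierRow_apply, Matrix.conjTranspose_apply, Matrix.sum_apply,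
    star_sum, Finset.sum_mul, ← Equiv.sum_comp (Equiv.subLeft i)]
  refine Finset.sum_congr rfl fun t _ => ?_
  have h1 : ρ ^ (i : ℕ) = ρ ^ (t : ℕ) * ρ ^ ((i - t : Fin N) : ℕ) := by
    rw [← pow_fin_add hρ, add_sub_cancel]
  have h2 : star ρ ^ (t : ℕ) * ρ ^ (t : ℕ) = 1 := by rw [← mul_pow, hc, one_pow]
  simp only [Equiv.subLeft_apply, Matrix.conjTranspose_apply, blockCirculant, sub_sub_cancel,
    Matrix.smul_apply, smul_eq_mul, star_mul', star_pow]
  rw [h1]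
  linear_combination (-(ρ ^ ((i - t : Fin N) : ℕ) * star (B t r s))) * h2

/-- Corollary 1 of the paper: for a block-circulant matrix `H̄` built from the real
`n_c × n_v` blocks `H_0, …, H_{N-1}` (first block column `H_0, …, H_{N-1}`), with
associated polynomial matrix `H(x) = ∑ H_t xᵗ`, a complex number is an eigenvalue of
(the complexification of) `H̄ H̄ᵀ` iff it is an eigenvalue of `H(ρ) H(ρ)ᴴ` for some
`N`-th root of unity `ρ`. -/
theorem eigenvalues_of_block_circulant_HHT
    (N nc nv : ℕ) (hN : 0 < N) (hnc : 0 < nc) (hnv : 0 < nv)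
    (Hb : Fin N → Matrix (Fin nc) (Fin nv) ℝ) (lam : ℂ) :
    let Hbar : Matrix (Fin N × Fin nc) (Fin N × Fin nv) ℝ :=
      fun p q => Hb (p.1 - q.1) p.2 q.2
    let Hpoly : ℂ → Matrix (Fin nc) (Fin nv) ℂ :=
      fun ρ => ∑ t : Fin N, ρ ^ (t : ℕ) • (Hb t).map Complex.ofReal
    (lam ∈ spectrum ℂ ((Hbar * Hbar.transpose).map Complex.ofReal) ↔
      ∃ ρ : ℂ, ρ ^ N = 1 ∧ lam ∈ spectrum ℂ (Hpoly ρ * (Hpoly ρ)ᴴ)) := by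
  intro Hbar Hpoly
  have : NeZero N := ⟨hN.ne'⟩
  set C : Matrix (Fin N × Fin nc) (Fin N × Fin nv) ℂ :=
    blockCirculant fun t => (Hb t).map Complex.ofReal with hC
  have hM : (Hbar * Hbar.transpose).map Complex.ofReal = C * Cᴴ := by
    ext p q
    rw [Matrix.map_apply, Matrix.mul_apply, Matrix.mul_apply]
    simp only [Matrix.transpose_apply]
    simp [Hbar, hC, blockCirculant]
  have key : ∀ ρ : ℂ, ρ ^ N = 1 →
      fourierRow N nc ρ * (algebraMap ℂ _ lam - C * Cᴴ) =
        (algebraMap ℂ _ lam - Hpoly ρ * (Hpoly ρ)ᴴ) * fourierRow N nc ρ := by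
    intro ρ hρ
    rw [Matrix.mul_sub, Matrix.sub_mul, ← Matrix.mul_assoc, hC, fourierRow_mul_circulant hρ,
      Matrix.mul_assoc, fourierRow_mul_circulant_conjTranspose hρ, ← Matrix.mul_assoc]
    simp [Algebra.algebraMap_eq_smul_one, Hpoly]
  rw [hM]
  constructor
  · intro h
    by_contra! hcon
    refine h (Matrix.mulVec_injective_iff_isUnit.mp ?_)
    refine (injective_iff_map_eq_zero (Matrix.mulVecLin _)).mpr fun u hu => ?_
    refine fourierRow_jointly_injective u fun ρ hρ => ?_
    have hinj := Matrix.mulVec_injective_iff_isUnit.mpr (spectrum.notMem_iff.mp (hcon ρ hρ))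
    apply hinj
    rw [Matrix.mulVec_mulVec, ← key ρ hρ, ← Matrix.mulVec_mulVec, ← Matrix.mulVecLin_apply,
      ← Matrix.mulVecLin_apply, hu]
    simp
  · rintro ⟨ρ, hρ, h⟩ hu
    refine h (Matrix.mulVec_surjective_iff_isUnit.mp fun v => ?_)
    obtain ⟨w, rfl⟩ := fourierRow_surjective (N := N) ρ v
    obtain ⟨u, rfl⟩ := Matrix.mulVec_surjective_iff_isUnit.mpr hu w
    exact ⟨fourierRow N nc ρ *ᵥ u, by
      rw [Matrix.mulVec_mulVec, ← key ρ hρ, ← Matrix.mulVec_mulVec]⟩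
end

section
/- Under the Tanner graph setup, for every integer k with 1 ≤ k and (k : ℕ∞) < g (i.e., 2k is strictly less than twice the girth of G), the number of cycles of length 2k in G satisfies 2k·N_{2k} = |E| − (m + n) + (−q1)^k·(n − μ) + (−q2)^k·(m − μ) + trace(D_k^{(q1·q2)}(H Hᵀ − (q1+q2)·I_m)) − (m − μ)·(the value of D_k^{(q1·q2)} at −(q1+q2)). Here the last two terms together equal the sum, over all eigenvalues α of H Hᵀ − (q1+q2)·I_m with α ≠ −(q1+q2), counted with multiplicity, of S_{α,k} := ξ_{α,1}^k + ξ_{α,2}^k, where ξ_{α,1}, ξ_{α,2} are the two roots of ξ² − α·ξ + q1·q2 = 0, so that S_{α,1} = α, S_{α,2} = α² − 2·q1·q2 and S_{α,k} = α·S_{α,k−1} − q1·q2·S_{α,k−2} for k ≥ 3. -/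
/-!
Since `D_k^{(q1 q2)}(-(q1 + q2)) = (-q1)^k + (-q2)^k`, the rank of `H` cancels from the formula, and
what has to be shown is
`2k N_{2k} = |E| - (m + n) + (-q1)^k (n - m) + tr D_k(α)` with `α = H Hᵀ - (q1 + q2)`.

**Cycles as non-backtracking sequences.** Consider `2k`-periodic vertex sequences `x` with
consecutive terms adjacent and `x t ≠ x (t + 2)` for all `t`. A return of such a sequence to a vertex
after `r > 0` steps forces `r ≥ g` (`egirth_le_of_return`). If a vertex were repeated within one
period, the period would split into two returns, so that `2k ≥ 2g`. For `k < g` these sequences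
are therefore exactly the rooted oriented cycles of length `2k` (`card_nbSeq_eq_cycleCount`), and
their number is `tr B^{2k}`, where `B` is the non-backtracking (Hashimoto) matrix indexed by the
darts of the graph (`card_nbSeq_eq_trace`).

**Block form.** Each edge of the Tanner graph carries two darts. Sorting the darts by direction
gives `B = [0, X; Y, 0]` with `X = VᵀV - 1`, `Y = CᵀC - 1`, where `C` and `V` are the check-edge and
variable-edge incidence matrices (`relMatrix_tannerDart`). Hence `tr B^{2k} = 2 tr (XY)^k`.

**The trace.** From `C Cᵀ = q2 + 1`, `V Vᵀ = q1 + 1` and `C Vᵀ = H` it follows that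
`X² = (q1 - 1) X + q1`, `Y² = (q2 - 1) Y + q2`, and that `C (XY)^k Cᵀ` is a polynomial in `α` obeying
the Dickson recurrence. Comparing traces yields
`a_{k+2} + (q1 - 1) a_{k+1} - q1 a_k = d_{k+2} + (q1 - 1) d_{k+1} - q1 d_k` for `a_k = tr (XY)^k` and
`d_k = tr D_k(α)`. The difference `a_k - d_k` is thus a combination of `1` and `(-q1)^k`, determined
by its values at `k = 0, 1` (`trace_edge_pow`).
-/

open Matrix Finset

/-- The Tanner graph of a real matrix `H`: the simple bipartite graph on `α ⊕ β`
in which check node `i` is adjacent to variable node `j` iff `H i j = 1`. -/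
def tannerGraph {α β : Type*} (H : Matrix α β ℝ) : SimpleGraph (α ⊕ β) :=
  SimpleGraph.fromRel (fun u v => ∃ i j, u = Sum.inl i ∧ v = Sum.inr j ∧ H i j = 1)

/-- The number of pairs `(v, w)` where `w` is a closed walk of length `l` based at `v`
that is a cycle. -/
noncomputable def cycleCount {V : Type*} (G : SimpleGraph V) (l : ℕ) : ℕ :=
  Nat.card {p : Σ v : V, G.Walk v v // p.2.length = l ∧ p.2.IsCycle}

/-- `N_{2k}`: the number of cycles of length `2k` in `G`, as a real number. -/
noncomputable def numCycles {V : Type*} (G : SimpleGraph V) (k : ℕ) : ℝ :=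
  (cycleCount G (2 * k) : ℝ) / (4 * k)

/-! ### Traces of powers of relation matrices -/

/-- The 0/1 matrix of a relation. -/
noncomputable def relMatrix {ι : Type*} (R : ι → ι → Prop) : Matrix ι ι ℝ :=
  open Classical in Matrix.of fun i j => if R i j then 1 else 0

/-- Powers of a relation matrix count chains `x 0, …, x l` of the relation with given endpoints. -/
lemma relMatrix_pow_apply {ι : Type*} [Fintype ι] [DecidableEq ι] (R : ι → ι → Prop) (l : ℕ) :
    ∀ i j, (relMatrix R ^ l) i j = Nat.card {x : Fin (l + 1) → ι //
      x 0 = i ∧ x (Fin.last l) = j ∧ ∀ t : Fin l, R (x t.castSucc) (x t.succ)} := by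
  classical
  induction l with
  | zero =>
    intro i j
    rw [pow_zero, Matrix.one_apply]
    split_ifs with h
    · subst h
      have : Unique {x : Fin (0 + 1) → ι //
          x 0 = i ∧ x (Fin.last 0) = i ∧ ∀ t : Fin 0, R (x t.castSucc) (x t.succ)} :=
        { default := ⟨fun _ => i, rfl, rfl, fun t => t.elim0⟩
          uniq := fun x => Subtype.ext (funext fun t => by
            have ht : t = 0 := Fin.ext (by omega)
            rw [ht]; exact x.2.1) }
      rw [Nat.card_unique, Nat.cast_one]
    · have : IsEmpty {x : Fin (0 + 1) → ι //
          x 0 = i ∧ x (Fin.last 0) = j ∧ ∀ t : Fin 0, R (x t.castSucc) (x t.succ)} :=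
        ⟨fun x => h (x.2.1.symm.trans x.2.2.1)⟩
      rw [Nat.card_of_isEmpty, Nat.cast_zero]
  | succ l ih =>
    intro i j
    let e : {x : Fin (l + 1 + 1) → ι // x 0 = i ∧ x (Fin.last (l + 1)) = j ∧
          ∀ t : Fin (l + 1), R (x t.castSucc) (x t.succ)} ≃
        Σ a : {a // R i a}, {x : Fin (l + 1) → ι // x 0 = a.1 ∧ x (Fin.last l) = j ∧
          ∀ t : Fin l, R (x t.castSucc) (x t.succ)} :=
      { toFun := fun x => ⟨⟨x.1 1, by have := x.2.2.2 0; rw [Fin.castSucc_zero, x.2.1] at this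
                                      exact this⟩,
          ⟨Fin.tail x.1, rfl, x.2.2.1, fun t => by simpa [Fin.tail] using x.2.2.2 t.succ⟩⟩
        invFun := fun y => ⟨Fin.cons i y.2.1, rfl, by
          have := y.2.2.2.1
          rw [← Fin.succ_last, Fin.cons_succ]; exact this, by
          intro t
          refine Fin.cases ?_ (fun t => ?_) t
          · rw [Fin.castSucc_zero, Fin.cons_zero, Fin.cons_succ, y.2.2.1]; exact y.1.2
          · rw [← Fin.succ_castSucc, Fin.cons_succ, Fin.cons_succ]; exact y.2.2.2.2 t⟩
        left_inv := by
          rintro ⟨x, rfl, h2, h3⟩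
          exact Subtype.ext (Fin.cons_self_tail x)
        right_inv := by
          rintro ⟨⟨a, ha⟩, ⟨x, h1, h2, h3⟩⟩
          dsimp only at h1
          subst h1
          rfl }
    rw [Nat.card_congr e, Nat.card_sigma, pow_succ', Matrix.mul_apply, Nat.cast_sum]
    simp_rw [ih]
    rw [← Finset.sum_subtype (Finset.univ.filter (R i)) (by simp)
      (fun a => (Nat.card {x : Fin (l + 1) → ι // x 0 = a ∧ x (Fin.last l) = j ∧
          ∀ t : Fin l, R (x t.castSucc) (x t.succ)} : ℝ)), Finset.sum_filter]
    simp [relMatrix]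

/-- The trace of the `l`-th power counts closed chains, encoded as `l`-periodic sequences on `ℕ`. -/
lemma trace_relMatrix_pow {ι : Type*} [Fintype ι] [DecidableEq ι] (R : ι → ι → Prop) {l : ℕ}
    (hl : 0 < l) :
    (relMatrix R ^ l).trace = Nat.card {x : ℕ → ι // (∀ t, x (t + l) = x t) ∧
      ∀ t, R (x t) (x (t + 1))} := by
  classical
  let f : {x : ℕ → ι // (∀ t, x (t + l) = x t) ∧ ∀ t, R (x t) (x (t + 1))} →
      Σ i : ι, {x : Fin (l + 1) → ι //
      x 0 = i ∧ x (Fin.last l) = i ∧ ∀ t : Fin l, R (x t.castSucc) (x t.succ)} :=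
    fun x => ⟨x.1 0, ⟨fun t => x.1 t, rfl, by simpa using x.2.1 0, fun t => x.2.2 t⟩⟩
  have hf : Function.Bijective f := by
    constructor
    · rintro ⟨x, hx⟩ ⟨y, hy⟩ h
      refine Subtype.ext (funext fun t => ?_)
      have h1 : (f ⟨x, hx⟩).2.1 ⟨t % l, by have := Nat.mod_lt t hl; omega⟩ =
        (f ⟨y, hy⟩).2.1 ⟨t % l, by have := Nat.mod_lt t hl; omega⟩ := by rw [h]
      change x t = y t
      rw [← Function.Periodic.map_mod_nat hx.1 t, ← Function.Periodic.map_mod_nat hy.1 t]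
      exact h1
    · rintro ⟨i, x, rfl, h2, h3⟩
      let y : ℕ → ι := fun t => x ⟨t % l, by have := Nat.mod_lt t hl; omega⟩
      have hy : ∀ t (ht : t < l + 1), y t = x ⟨t, ht⟩ := by
        intro t ht
        rcases (Nat.lt_succ_iff.1 ht).lt_or_eq with h | rfl
        · simp only [y, Nat.mod_eq_of_lt h]
        · simp only [y, Nat.mod_self]
          exact h2.symm
      have hp : ∀ t, y (t + l) = y t := fun t => by simp [y]
      have hR : ∀ t, R (y t) (y (t + 1)) := by
        intro t
        have ht := Nat.mod_lt t hl
        have e1 : y t = y (t % l) := by simp [y]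
        have e2 : y (t + 1) = y (t % l + 1) := by simp [y]
        rw [e1, e2, hy _ (by omega), hy _ (by omega)]
        exact h3 ⟨t % l, ht⟩
      refine ⟨⟨y, hp, hR⟩, ?_⟩
      have hxy : (fun t : Fin (l + 1) => y t) = x := funext fun t => hy t t.2
      exact Sigma.subtype_ext (hy 0 (Nat.succ_pos l)) hxy
  rw [Nat.card_eq_of_bijective f hf, Nat.card_sigma, Matrix.trace, Nat.cast_sum]
  simp_rw [Matrix.diag_apply, relMatrix_pow_apply]

/-! ### Non-backtracking sequences and the girth -/

/-- The walk `x i, x (i+1), …, x (i+n)` along a sequence of successively adjacent vertices. -/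
def seqWalk {V : Type*} {G : SimpleGraph V} {x : ℕ → V} (h : ∀ t, G.Adj (x t) (x (t + 1)))
    (i : ℕ) : ∀ n, G.Walk (x i) (x (i + n))
  | 0 => SimpleGraph.Walk.nil
  | n + 1 => (seqWalk h i n).concat (h (i + n))

lemma length_seqWalk {V : Type*} {G : SimpleGraph V} {x : ℕ → V}
    (h : ∀ t, G.Adj (x t) (x (t + 1))) (i n : ℕ) : (seqWalk h i n).length = n := by
  induction n with
  | zero => rfl
  | succ n ih => simp [seqWalk, ih]

lemma getVert_seqWalk {V : Type*} {G : SimpleGraph V} {x : ℕ → V}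
    (h : ∀ t, G.Adj (x t) (x (t + 1))) (i n : ℕ) :
    ∀ t ≤ n, (seqWalk h i n).getVert t = x (i + t) := by
  induction n with
  | zero => intro t ht; obtain rfl : t = 0 := by omega
            rfl
  | succ n ih =>
    intro t ht
    rw [seqWalk, SimpleGraph.Walk.concat_eq_append, SimpleGraph.Walk.getVert_append,
      length_seqWalk]
    split_ifs with h1
    · exact ih t h1.le
    · obtain rfl | rfl : t = n ∨ t = n + 1 := by omega
      · simp
      · simp

lemma isCycle_seqWalk {V : Type*} {G : SimpleGraph V} {x : ℕ → V}
    (h : ∀ t, G.Adj (x t) (x (t + 1))) (i n : ℕ) (hn : 3 ≤ n) (hx : x (i + n) = x i)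
    (hinj : ∀ s t, s < t → t < n → x (i + s) ≠ x (i + t)) :
    ((seqWalk h i n).copy rfl hx).IsCycle := by
  rw [SimpleGraph.Walk.isCycle_iff_isPath_tail_and_le_length]
  refine ⟨?_, by simpa [length_seqWalk] using hn⟩
  rw [← SimpleGraph.Walk.IsPath.getVert_injOn_iff]
  have key : ∀ s t, 0 < s → s < t → t ≤ n → x (i + s) ≠ x (i + t) := by
    intro s t h0 hst ht
    rcases ht.lt_or_eq with h1 | rfl
    · exact hinj s t hst h1
    · rw [hx]; exact (hinj 0 s h0 hst).symm
  intro s hs t ht hst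
  simp only [Set.mem_ofPred_eq, SimpleGraph.Walk.length_tail, SimpleGraph.Walk.length_copy,
    length_seqWalk] at hs ht
  rw [SimpleGraph.Walk.getVert_tail, SimpleGraph.Walk.getVert_tail,
    SimpleGraph.Walk.getVert_copy, SimpleGraph.Walk.getVert_copy,
    getVert_seqWalk _ _ _ _ (by omega), getVert_seqWalk _ _ _ _ (by omega)] at hst
  by_contra hne
  rcases Nat.lt_or_gt_of_ne hne with h1 | h1
  · exact key _ _ (by omega) (by omega) (by omega) hst
  · exact key _ _ (by omega) (by omega) (by omega) hst.symm

/-- A non-backtracking sequence that returns to a vertex after `n > 0` steps contains a cycle of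
length at most `n`: a shortest return inside it has no repeated vertex. -/
lemma egirth_le_of_return {V : Type*} {G : SimpleGraph V} {x : ℕ → V}
    (h : ∀ t, G.Adj (x t) (x (t + 1))) (hnb : ∀ t, x t ≠ x (t + 2)) (n : ℕ) :
    ∀ i, 0 < n → x (i + n) = x i → G.egirth ≤ n := by
  induction n using Nat.strong_induction_on with
  | _ n ih =>
  intro i hn hx
  by_cases hinj : ∀ s t, s < t → t < n → x (i + s) ≠ x (i + t)
  · have h3 : 3 ≤ n := by
      by_contra hlt
      obtain rfl | rfl : n = 1 ∨ n = 2 := by omega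
      · exact (h i).ne hx.symm
      · exact hnb i hx.symm
    have := SimpleGraph.egirth_le_length (isCycle_seqWalk h i n h3 hx hinj)
    simpa [length_seqWalk] using this
  · push Not at hinj
    obtain ⟨s, t, hst, ht, he⟩ := hinj
    refine (ih (t - s) (by omega) (i + s) (by omega) ?_).trans (by gcongr; omega)
    rw [he]; congr 1; omega

/-- The non-backtracking relation on darts: `d'` starts where `d` ends and is not the reversal
of `d`. Its matrix is the Hashimoto matrix. -/
def nbRel {V : Type*} (G : SimpleGraph V) (d d' : G.Dart) : Prop :=
  d.snd = d'.fst ∧ d.fst ≠ d'.snd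

/-- Closed tailless non-backtracking walks of length `l`, encoded as `l`-periodic sequences of
vertices. Periodicity makes the non-backtracking condition hold across the base point as well. -/
abbrev NBSeq {V : Type*} (G : SimpleGraph V) (l : ℕ) : Type _ :=
  {x : ℕ → V // (∀ t, x (t + l) = x t) ∧ (∀ t, G.Adj (x t) (x (t + 1))) ∧ ∀ t, x t ≠ x (t + 2)}

/-- A closed non-backtracking vertex sequence is the same as a closed chain of darts. -/
lemma card_nbSeq_eq_trace {V : Type*} (G : SimpleGraph V) [Fintype G.Dart] [DecidableEq G.Dart]
    {l : ℕ} (hl : 0 < l) : (Nat.card (NBSeq G l) : ℝ) = (relMatrix (nbRel G) ^ l).trace := by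
  rw [trace_relMatrix_pow _ hl]
  congr 1
  refine Nat.card_congr
    { toFun := fun x => ⟨fun t => ⟨(x.1 t, x.1 (t + 1)), x.2.2.1 t⟩, fun t => ?_,
        fun t => ⟨rfl, x.2.2.2 t⟩⟩
      invFun := fun y => ⟨fun t => (y.1 t).fst, fun t => by simp only [y.2.1], fun t => ?_,
        fun t => ?_⟩
      left_inv := fun x => rfl
      right_inv := fun y => ?_ }
  · apply SimpleGraph.Dart.ext
    have := x.2.1 (t + 1)
    rw [show t + 1 + l = t + l + 1 by omega] at this
    simp only [x.2.1, this]
  · change G.Adj (y.1 t).fst (y.1 (t + 1)).fst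
    rw [← (y.2.2 t).1]; exact (y.1 t).adj
  · have := (y.2.2 t).2
    rw [(y.2.2 (t + 1)).1] at this; exact this
  · refine Subtype.ext (funext fun t => SimpleGraph.Dart.ext _ _ (Prod.ext rfl ?_))
    exact (y.2.2 t).1.symm

/-- Below twice the girth, closed tailless non-backtracking walks are exactly the rooted oriented
cycles. -/
lemma card_nbSeq_eq_cycleCount {V : Type*} (G : SimpleGraph V)
    {l : ℕ} (hl : 0 < l) (hg : (l : ℕ∞) < 2 * G.egirth) :
    Nat.card (NBSeq G l) = cycleCount G l := by
  have hinj : ∀ x : NBSeq G l, ∀ s t, s < t → t < l → x.1 (0 + s) ≠ x.1 (0 + t) := by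
    rintro ⟨x, hp, ha, hnb⟩ s t hst htl he
    simp only [Nat.zero_add] at he
    -- A repetition at times `s < t` gives two returns: from `s` to `t` and from `t` to `s + l`.
    have h1 := egirth_le_of_return ha hnb (t - s) s (by omega)
      (by rw [he]; congr 1; omega)
    have h2 := egirth_le_of_return ha hnb (l - (t - s)) t (by omega)
      (by rw [← he, ← hp s]; congr 1; omega)
    have h3 := add_le_add h1 h2
    rw [← two_mul] at h3
    refine absurd hg (not_lt.2 (h3.trans ?_))
    norm_cast
    omega
  have h3 : ∀ x : NBSeq G l, 3 ≤ l := by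
    rintro ⟨x, hp, ha, hnb⟩
    have h1 := egirth_le_of_return ha hnb l 0 hl (hp 0)
    have := (SimpleGraph.three_le_egirth (G := G)).trans h1
    exact_mod_cast this
  let f : NBSeq G l → {p : Σ v : V, G.Walk v v // p.2.length = l ∧ p.2.IsCycle} := fun x =>
    ⟨⟨x.1 0, (seqWalk x.2.2.1 0 l).copy rfl (x.2.1 0)⟩, by simp [length_seqWalk],
      isCycle_seqWalk _ 0 l (h3 x) _ (hinj x)⟩
  have hfv : ∀ x t, t ≤ l → (f x).1.2.getVert t = x.1 t := by
    intro x t ht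
    simp only [f, SimpleGraph.Walk.getVert_copy]
    rw [getVert_seqWalk _ _ _ _ ht, Nat.zero_add]
  refine Nat.card_eq_of_bijective f ⟨fun x y h => ?_, fun p => ?_⟩
  · refine Subtype.ext (funext fun t => ?_)
    have ht := Nat.mod_lt t hl
    rw [← Function.Periodic.map_mod_nat x.2.1 t, ← Function.Periodic.map_mod_nat y.2.1 t,
      ← hfv x _ ht.le, ← hfv y _ ht.le, h]
  · obtain ⟨⟨v, w⟩, hwl, hw⟩ := p
    dsimp only at hwl hw
    have hl3 : 3 ≤ l := hwl ▸ hw.three_le_length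
    let y : ℕ → V := fun t => w.getVert (t % l)
    have hy : ∀ t ≤ l, y t = w.getVert t := by
      intro t ht
      rcases ht.lt_or_eq with h | rfl
      · simp only [y, Nat.mod_eq_of_lt h]
      · simp only [y, Nat.mod_self]
        rw [← hwl, SimpleGraph.Walk.getVert_length, SimpleGraph.Walk.getVert_zero]
    have hp : ∀ t, y (t + l) = y t := fun t => by simp [y]
    have ha : ∀ t, G.Adj (y t) (y (t + 1)) := by
      intro t
      have ht := Nat.mod_lt t hl
      have e1 : y t = y (t % l) := by simp [y]
      have e2 : y (t + 1) = y (t % l + 1) := by simp [y]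
      rw [e1, e2, hy _ (by omega), hy _ (by omega)]
      exact w.adj_getVert_succ (by omega)
    have hnb : ∀ t, y t ≠ y (t + 2) := by
      intro t he
      have h1 := Nat.mod_lt t hl
      have h2 := Nat.mod_lt (t + 2) hl
      have := hw.getVert_injOn' (x₁ := t % l) (x₂ := (t + 2) % l)
        (by simp only [Set.mem_ofPred_eq]; omega) (by simp only [Set.mem_ofPred_eq]; omega) he
      -- Injectivity on one period gives `t ≡ t + 2` modulo `l`, so `l ∣ 2`, against `l ≥ 3`.
      have h5 : 0 ≡ 2 [MOD l] := Nat.ModEq.add_left_cancel' t this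
      have h6 := (Nat.modEq_zero_iff_dvd.1 h5.symm)
      have := Nat.le_of_dvd (by omega) h6
      omega
    refine ⟨⟨y, hp, ha, hnb⟩, Subtype.ext ?_⟩
    have h0 : y 0 = v := by rw [hy 0 (Nat.zero_le _), SimpleGraph.Walk.getVert_zero]
    -- Equality of based closed walks is reduced to equality of vertices, with the base point
    -- generalized to avoid casts.
    have hgen : ∀ (u : V) (w' : G.Walk u u) (hu : u = v), w'.length = w.length →
        (∀ t ≤ w.length, w'.getVert t = w.getVert t) →
        (⟨u, w'⟩ : Σ v : V, G.Walk v v) = ⟨v, w⟩ := by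
      rintro u w' rfl h1 h2
      rw [SimpleGraph.Walk.ext_getVert_le_length h1 (fun t ht => h2 t (h1 ▸ ht))]
    refine hgen _ _ h0 (by simp [length_seqWalk, hwl]) fun t ht => ?_
    rw [hwl] at ht
    rw [← hy t ht]
    exact hfv ⟨y, hp, ha, hnb⟩ t ht

/-! ### The trace of powers of `X * Y` -/

/-- The polynomials with `C (XY)^k Cᵀ = openPoly k` evaluated at `α = H Hᵀ - (q1 + q2)`. The `(i, j)`
entry counts non-backtracking walks of length `2k + 1` that start at the check node `i` and whose
last edge leaves the check node `j`. -/
noncomputable def openPoly (q1 q2 : ℝ) : ℕ → Polynomial ℝ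
  | 0 => Polynomial.C (q2 + 1)
  | 1 => Polynomial.C q2 * (Polynomial.X + Polynomial.C (q1 - 1))
  | k + 2 => Polynomial.X * openPoly q1 q2 (k + 1) - Polynomial.C (q1 * q2) * openPoly q1 q2 k

/-- The combination of `openPoly` that appears in the trace recursion, in terms of Dickson
polynomials of the first kind. -/
lemma openPoly_dickson (q1 q2 : ℝ) (k : ℕ) :
    openPoly q1 q2 (k + 2) - Polynomial.C (q1 * q2) * openPoly q1 q2 k =
      Polynomial.C q2 * (Polynomial.dickson 1 (q1 * q2) (k + 2)
        + Polynomial.C (q1 - 1) * Polynomial.dickson 1 (q1 * q2) (k + 1)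
        - Polynomial.C q1 * Polynomial.dickson 1 (q1 * q2) k) := by
  induction k using Nat.twoStepInduction with
  | zero =>
    simp only [openPoly, Polynomial.dickson_add_two, Polynomial.dickson_one, zero_add,
      Polynomial.dickson_zero, map_mul, map_add, map_sub, map_one, Nat.cast_one]
    ring
  | one =>
    simp only [openPoly, Polynomial.dickson_add_two, Polynomial.dickson_one, zero_add,
      Polynomial.dickson_zero, map_mul, map_add, map_sub, map_one, Nat.cast_one]
    ring
  | more k h0 h1 =>
    have F (j : ℕ) : openPoly q1 q2 (j + 2) = Polynomial.X * openPoly q1 q2 (j + 1) -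
        Polynomial.C (q1 * q2) * openPoly q1 q2 j := by rw [openPoly]
    have f2 := F k
    have f4 := F (k + 2)
    have e2 := Polynomial.dickson_add_two 1 (q1 * q2) k
    have e3 := Polynomial.dickson_add_two 1 (q1 * q2) (k + 1)
    have e4 := Polynomial.dickson_add_two 1 (q1 * q2) (k + 2)
    simp only [Nat.add_assoc, Nat.reduceAdd] at *
    linear_combination Polynomial.X * h1 - Polynomial.C (q1 * q2) * h0 + f4
      - Polynomial.C (q1 * q2) * f2
      - Polynomial.C q2 * (e4 + Polynomial.C (q1 - 1) * e3 - Polynomial.C q1 * e2)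

section
variable {E a b : Type*} [Fintype E] [Fintype a] [Fintype b] [DecidableEq E] [DecidableEq a]
  [DecidableEq b]

/-- The trace of `(XY)^k` for `X = VᵀV - 1` and `Y = CᵀC - 1`, from the incidence relations only. -/
lemma trace_edge_pow (q1 q2 : ℝ) (hq2 : q2 ≠ 0)
    (C : Matrix a E ℝ) (V : Matrix b E ℝ) (H : Matrix a b ℝ)
    (hC : C * Cᵀ = (q2 + 1) • 1) (hV : V * Vᵀ = (q1 + 1) • 1) (hH : C * Vᵀ = H)
    (ha : (Fintype.card a : ℝ) * (q2 + 1) = Fintype.card E)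
    (hb : (Fintype.card b : ℝ) * (q1 + 1) = Fintype.card E)
    (hHH : (H * Hᵀ).trace = Fintype.card E) (k : ℕ) :
    (((Vᵀ * V - 1) * (Cᵀ * C - 1)) ^ k).trace =
      Fintype.card E - ((Fintype.card a : ℝ) + Fintype.card b)
      + (-q1) ^ k * ((Fintype.card b : ℝ) - Fintype.card a)
      + (Polynomial.aeval (H * Hᵀ - (q1 + q2) • (1 : Matrix a a ℝ))
          (Polynomial.dickson 1 (q1 * q2) k)).trace := by
  have hH' : V * Cᵀ = Hᵀ := by rw [← hH, transpose_mul, transpose_transpose]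
  set X := Vᵀ * V - 1 with hX
  set Y := Cᵀ * C - 1 with hY
  set α := H * Hᵀ - (q1 + q2) • (1 : Matrix a a ℝ) with hα
  clear_value X Y α
  have hVX : V * X = q1 • V := by
    rw [hX, Matrix.mul_sub, ← Matrix.mul_assoc, hV, Matrix.smul_mul, Matrix.one_mul, Matrix.mul_one]
    module
  have hCY : C * Y = q2 • C := by
    rw [hY, Matrix.mul_sub, ← Matrix.mul_assoc, hC, Matrix.smul_mul, Matrix.one_mul, Matrix.mul_one]
    module
  have hVY : V * Y = Hᵀ * C - V := by
    rw [hY, Matrix.mul_sub, ← Matrix.mul_assoc, hH', Matrix.mul_one]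
  have hCX : C * X = H * V - C := by
    rw [hX, Matrix.mul_sub, ← Matrix.mul_assoc, hH, Matrix.mul_one]
  -- Equivalently `(X - q1)(X + 1) = 0` and `(Y - q2)(Y + 1) = 0`.
  have hXX : X * X = (q1 - 1) • X + q1 • 1 := by
    nth_rw 1 [hX]
    rw [Matrix.sub_mul, Matrix.mul_assoc, hVX, Matrix.mul_smul, Matrix.one_mul, hX]
    module
  have hYY : Y * Y = (q2 - 1) • Y + q2 • 1 := by
    nth_rw 1 [hY]
    rw [Matrix.sub_mul, Matrix.mul_assoc, hCY, Matrix.mul_smul, Matrix.one_mul, hY]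
    module
  have hCM : C * (X * Y) = H * Hᵀ * C - H * V - q2 • C := by
    rw [← Matrix.mul_assoc, hCX, Matrix.sub_mul, Matrix.mul_assoc, hVY, hCY, Matrix.mul_sub,
      Matrix.mul_assoc]
  have hVM : V * (X * Y) = q1 • (Hᵀ * C - V) := by
    rw [← Matrix.mul_assoc, hVX, Matrix.smul_mul, hVY]
  have hCMM : C * (X * Y) * (X * Y) = α * (C * (X * Y)) - (q1 * q2) • C := by
    have h1 : C * (X * Y) * (X * Y) =
        H * Hᵀ * (C * (X * Y)) - H * (V * (X * Y)) - q2 • (C * (X * Y)) := by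
      nth_rw 1 [hCM]
      simp only [Matrix.sub_mul, Matrix.mul_assoc, Matrix.smul_mul]
    have h2 : H * (V * (X * Y)) = q1 • (C * (X * Y)) + (q1 * q2) • C := by
      rw [hVM, hCM, Matrix.mul_smul, Matrix.mul_sub, ← Matrix.mul_assoc]
      module
    rw [h1, h2, hα, Matrix.sub_mul, Matrix.smul_mul, Matrix.one_mul]
    module
  have hF : ∀ k, C * (X * Y) ^ k * Cᵀ = Polynomial.aeval α (openPoly q1 q2 k) := by
    intro k
    induction k using Nat.twoStepInduction with
    | zero =>
      rw [pow_zero, Matrix.mul_one, hC, openPoly, Polynomial.aeval_C,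
        Algebra.algebraMap_eq_smul_one]
    | one =>
      rw [pow_one, hCM]
      simp only [Matrix.sub_mul, Matrix.mul_assoc, Matrix.smul_mul, hC, hH', openPoly, map_mul,
        map_add, Polynomial.aeval_C, Polynomial.aeval_X, Algebra.algebraMap_eq_smul_one, Matrix.mul_smul,
        Matrix.mul_one, Matrix.one_mul, hα]
      module
    | more k h0 h1 =>
      rw [openPoly, map_sub, map_mul, map_mul, ← h0, ← h1, Polynomial.aeval_X, Polynomial.aeval_C,
        Algebra.algebraMap_eq_smul_one, Matrix.smul_mul, Matrix.one_mul, pow_succ' _ (k + 1),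
        pow_succ' _ k]
      have : C * (X * Y * (X * Y * (X * Y) ^ k)) * Cᵀ
          = C * (X * Y) * (X * Y) * ((X * Y) ^ k * Cᵀ) := by simp only [Matrix.mul_assoc]
      rw [this, hCMM]
      simp only [Matrix.sub_mul, Matrix.mul_assoc, Matrix.smul_mul]
  -- By cyclicity `tr (C M Cᵀ) = tr (CᵀC M)`, and `CᵀC = Y + 1`.
  have hf : ∀ k, (Polynomial.aeval α (openPoly q1 q2 k)).trace =
      (Y * (X * Y) ^ k).trace + ((X * Y) ^ k).trace := by
    intro k
    rw [← hF, Matrix.trace_mul_comm, ← Matrix.mul_assoc, ← Matrix.trace_add]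
    congr 1
    rw [hY, Matrix.sub_mul, Matrix.one_mul, sub_add_cancel]
  -- The cyclic word `Y (XY)^{k+2}` contains the square `Y²`, and `X (YX)^{k+1}` the square `X²`.
  have hrec : ∀ k, (Y * (X * Y) ^ (k + 2)).trace = (q2 - 1) * ((X * Y) ^ (k + 2)).trace
      + q2 * ((q1 - 1) * ((X * Y) ^ (k + 1)).trace + q1 * (Y * (X * Y) ^ k).trace) := by
    intro k
    have e1 : (Y * (X * Y) ^ (k + 2)).trace = ((X * Y) ^ (k + 1) * X * (Y * Y)).trace := by
      rw [Matrix.trace_mul_comm, pow_succ _ (k + 1)]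
      simp only [Matrix.mul_assoc]
    have e2 : ((X * Y) ^ (k + 1) * X).trace = (X * X * (Y * (X * Y) ^ k)).trace := by
      rw [Matrix.trace_mul_comm, pow_succ' _ k]
      simp only [Matrix.mul_assoc]
    have e3 : (X * Y) ^ (k + 1) * X * Y = (X * Y) ^ (k + 2) := by
      rw [pow_succ _ (k + 1), Matrix.mul_assoc]
    have e4 : X * (Y * (X * Y) ^ k) = (X * Y) ^ (k + 1) := by
      rw [pow_succ' _ k, Matrix.mul_assoc]
    rw [e1, hYY, Matrix.mul_add, Matrix.mul_smul, Matrix.mul_smul, Matrix.mul_one, e3,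
      Matrix.trace_add, Matrix.trace_smul, Matrix.trace_smul, e2, hXX, Matrix.add_mul,
      Matrix.smul_mul, Matrix.smul_mul, Matrix.one_mul, e4, Matrix.trace_add, Matrix.trace_smul,
      Matrix.trace_smul]
    simp only [smul_eq_mul]
  have hd : ∀ k, (Polynomial.aeval α (openPoly q1 q2 (k + 2))).trace -
      q1 * q2 * (Polynomial.aeval α (openPoly q1 q2 k)).trace =
      q2 * ((Polynomial.aeval α (Polynomial.dickson 1 (q1 * q2) (k + 2))).trace
        + (q1 - 1) * (Polynomial.aeval α (Polynomial.dickson 1 (q1 * q2) (k + 1))).trace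
        - q1 * (Polynomial.aeval α (Polynomial.dickson 1 (q1 * q2) k)).trace) := by
    intro k
    have := congrArg (fun p => (Polynomial.aeval α p).trace) (openPoly_dickson q1 q2 k)
    simp only [← Polynomial.smul_eq_C_mul] at this
    simpa only [map_sub, map_add, map_smul, Matrix.trace_sub,
      Matrix.trace_add, Matrix.trace_smul, smul_eq_mul] using this
  have trV : (Vᵀ * V).trace = Fintype.card E := by
    rw [Matrix.trace_mul_comm, hV, Matrix.trace_smul, Matrix.trace_one, smul_eq_mul, mul_comm, hb]
  have trC : (Cᵀ * C).trace = Fintype.card E := by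
    rw [Matrix.trace_mul_comm, hC, Matrix.trace_smul, Matrix.trace_one, smul_eq_mul, mul_comm, ha]
  induction k using Nat.twoStepInduction with
  | zero =>
    rw [pow_zero, Matrix.trace_one, Polynomial.dickson_zero]
    have : (Polynomial.aeval α (3 - (1 : ℕ) : Polynomial ℝ)).trace = 2 * Fintype.card a := by
      have e : (3 - (1 : ℕ) : Polynomial ℝ) = Polynomial.C 2 := by
        rw [Nat.cast_one, map_ofNat]; norm_num
      rw [e, Polynomial.aeval_C, Algebra.algebraMap_eq_smul_one, Matrix.trace_smul,
        Matrix.trace_one, smul_eq_mul]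
    rw [this]; ring
  | one =>
    have e1 : (X * Y).trace = 0 := by
      have : (Vᵀ * V * (Cᵀ * C)).trace = Fintype.card E := by
        rw [Matrix.mul_assoc, Matrix.trace_mul_comm, ← Matrix.mul_assoc, hH', Matrix.mul_assoc, hH,
          Matrix.trace_mul_comm, hHH]
      rw [hX, hY, Matrix.sub_mul, Matrix.mul_sub, Matrix.mul_one, Matrix.one_mul, Matrix.trace_sub,
        Matrix.trace_sub, Matrix.trace_sub, this, trV, trC, Matrix.trace_one]
      ring
    rw [pow_one, e1, Polynomial.dickson_one, Polynomial.aeval_X, hα, Matrix.trace_sub, hHH,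
      Matrix.trace_smul, Matrix.trace_one, smul_eq_mul]
    linear_combination ha + hb
  | more k h0 h1 =>
    have r := hrec k
    have d := hd k
    rw [hf, hf] at d
    refine mul_left_cancel₀ hq2 ?_
    linear_combination r * (-1) + d - q2 * (q1 - 1) * h1 + q1 * q2 * h0
end

/-! ### Darts and incidence matrices of the Tanner graph -/

lemma tannerGraph_adj_inl_inr {α β : Type*} (H : Matrix α β ℝ) (i : α) (j : β) :
    (tannerGraph H).Adj (Sum.inl i) (Sum.inr j) ↔ H i j = 1 := by
  simp [tannerGraph]

lemma tannerGraph_not_adj_inl_inl {α β : Type*} (H : Matrix α β ℝ) (i i' : α) :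
    ¬ (tannerGraph H).Adj (Sum.inl i) (Sum.inl i') := by
  simp [tannerGraph]

lemma tannerGraph_not_adj_inr_inr {α β : Type*} (H : Matrix α β ℝ) (j j' : β) :
    ¬ (tannerGraph H).Adj (Sum.inr j) (Sum.inr j') := by
  simp [tannerGraph]

/-- The edges of the Tanner graph, as pairs (check node, variable node). -/
abbrev TannerEdge {α β : Type*} (H : Matrix α β ℝ) : Type _ := {p : α × β // H p.1 p.2 = 1}

/-- The darts of the Tanner graph: the left copy of an edge is directed from the check node to the
variable node, the right copy the other way. -/
def tannerDart {α β : Type*} (H : Matrix α β ℝ) :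
    TannerEdge H ⊕ TannerEdge H → (tannerGraph H).Dart
  | Sum.inl e => ⟨(Sum.inl e.1.1, Sum.inr e.1.2), (tannerGraph_adj_inl_inr H _ _).2 e.2⟩
  | Sum.inr e => ⟨(Sum.inr e.1.2, Sum.inl e.1.1), ((tannerGraph_adj_inl_inr H _ _).2 e.2).symm⟩

lemma tannerDart_bijective {α β : Type*} (H : Matrix α β ℝ) :
    Function.Bijective (tannerDart H) := by
  constructor
  · rintro (⟨⟨i, j⟩, h⟩ | ⟨⟨i, j⟩, h⟩) (⟨⟨i', j'⟩, h'⟩ | ⟨⟨i', j'⟩, h'⟩) he <;>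
      simp [tannerDart] at he ⊢
    · exact he
    · exact ⟨he.2, he.1⟩
  · rintro ⟨⟨i | j, i' | j'⟩, h⟩
    · exact absurd h (tannerGraph_not_adj_inl_inl H _ _)
    · exact ⟨Sum.inl ⟨(i, j'), (tannerGraph_adj_inl_inr H _ _).1 h⟩, rfl⟩
    · exact ⟨Sum.inr ⟨(i', j), (tannerGraph_adj_inl_inr H _ _).1 h.symm⟩, rfl⟩
    · exact absurd h (tannerGraph_not_adj_inr_inr H _ _)

lemma trace_submatrix_pow {ι κ : Type*} [Fintype ι] [Fintype κ] [DecidableEq ι] [DecidableEq κ]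
    (e : κ ≃ ι) (A : Matrix ι ι ℝ) (l : ℕ) : (A.submatrix e e ^ l).trace = (A ^ l).trace := by
  have h : A.submatrix e e ^ l = (A ^ l).submatrix e e := by
    induction l with
    | zero => simp
    | succ l ih => rw [pow_succ, pow_succ, ih, Matrix.submatrix_mul_equiv]
  rw [h]
  exact Equiv.sum_comp e fun i => (A ^ l) i i

lemma trace_fromBlocks_offDiag_pow {E : Type*} [Fintype E] [DecidableEq E] (X Y : Matrix E E ℝ)
    (k : ℕ) : (Matrix.fromBlocks 0 X Y 0 ^ (2 * k)).trace = 2 * ((X * Y) ^ k).trace := by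
  have h : ((Y * X) ^ k).trace = ((X * Y) ^ k).trace := by
    cases k with
    | zero => simp
    | succ k =>
      have : ∀ k, (Y * X) ^ k * Y = Y * (X * Y) ^ k := by
        intro k
        induction k with
        | zero => simp
        | succ k ih => rw [pow_succ', pow_succ', Matrix.mul_assoc, ih]; simp only [Matrix.mul_assoc]
      rw [pow_succ, ← Matrix.mul_assoc, this, Matrix.trace_mul_comm, ← Matrix.mul_assoc, pow_succ']
  rw [pow_mul, pow_two, Matrix.fromBlocks_multiply]
  simp only [Matrix.zero_mul, Matrix.mul_zero, zero_add, add_zero]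
  rw [Matrix.fromBlocks_diagonal_pow, Matrix.trace, Fintype.sum_sum_type]
  rw [two_mul]
  -- The two diagonal blocks are `(XY)^k` and `(YX)^k`.
  nth_rw 2 [← h]
  rfl

/-- The incidence matrix of check nodes and edges. -/
noncomputable def checkInc {α β : Type*} (H : Matrix α β ℝ) : Matrix α (TannerEdge H) ℝ :=
  open Classical in Matrix.of fun i e => if i = e.1.1 then 1 else 0

/-- The incidence matrix of variable nodes and edges. -/
noncomputable def varInc {α β : Type*} (H : Matrix α β ℝ) : Matrix β (TannerEdge H) ℝ :=
  open Classical in Matrix.of fun j e => if j = e.1.2 then 1 else 0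

lemma checkInc_apply {α β : Type*} [DecidableEq α] (H : Matrix α β ℝ) (i : α) (e : TannerEdge H) :
    checkInc H i e = if i = e.1.1 then 1 else 0 := by
  simp only [checkInc, Matrix.of_apply]
  congr

lemma varInc_apply {α β : Type*} [DecidableEq β] (H : Matrix α β ℝ) (j : β) (e : TannerEdge H) :
    varInc H j e = if j = e.1.2 then 1 else 0 := by
  simp only [varInc, Matrix.of_apply]
  congr

/-- The Hashimoto matrix of the Tanner graph in block form. A dart into a variable node is followed
by a dart out of the same variable node along a different edge, whence the block `VᵀV - 1`; the
other block arises in the same way at the check nodes. -/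
lemma relMatrix_tannerDart {α β : Type*} [Fintype α] [Fintype β]
    (H : Matrix α β ℝ) [DecidableEq (TannerEdge H)] :
    (relMatrix (nbRel (tannerGraph H))).submatrix (tannerDart H) (tannerDart H) =
      Matrix.fromBlocks 0 ((varInc H)ᵀ * varInc H - 1) ((checkInc H)ᵀ * checkInc H - 1) 0 := by
  classical
  ext (⟨⟨i, j⟩, h⟩ | ⟨⟨i, j⟩, h⟩) (⟨⟨i', j'⟩, h'⟩ | ⟨⟨i', j'⟩, h'⟩)
  · simp [relMatrix, nbRel, tannerDart]
  · by_cases h1 : i = i' <;> by_cases h2 : j = j' <;>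
      simp [relMatrix, nbRel, tannerDart, Matrix.mul_apply, varInc, h1, h2]
    all_goals exact Ne.symm h2
  · by_cases h1 : i = i' <;> by_cases h2 : j = j' <;>
      simp [relMatrix, nbRel, tannerDart, Matrix.mul_apply, checkInc, h1, h2]
    all_goals exact Ne.symm h1
  · simp [relMatrix, nbRel, tannerDart]

section
variable {α β : Type*} [Fintype α] [Fintype β] (H : Matrix α β ℝ) [Fintype (TannerEdge H)]

lemma sum_tannerEdge (f : α → β → ℝ) :
    ∑ e : TannerEdge H, f e.1.1 e.1.2 =
      ∑ i, ∑ j, open Classical in if H i j = 1 then f i j else 0 := by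
  classical
  rw [← Finset.sum_subtype (Finset.univ.filter fun p : α × β => H p.1 p.2 = 1) (by simp)
    (fun p => f p.1 p.2), Finset.sum_filter, Fintype.sum_prod_type]

lemma sum_ite_eq_one (q : ℕ) (f : α → ℝ) [DecidablePred fun a => f a = 1]
    (h : Nat.card {a // f a = 1} = q + 1) (c : ℝ) :
    (∑ a, if f a = 1 then c else 0) = (q + 1) * c := by
  rw [Nat.card_eq_fintype_card, Fintype.card_subtype] at h
  rw [← Finset.sum_filter, Finset.sum_const, h, nsmul_eq_mul]
  push_cast
  rfl

lemma checkInc_mul_transpose [DecidableEq α] (q : ℕ)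
    (hrow : ∀ i, Nat.card {j // H i j = 1} = q + 1) :
    checkInc H * (checkInc H)ᵀ = ((q : ℝ) + 1) • 1 := by
  classical
  ext i i'
  rw [Matrix.mul_apply]
  simp only [Matrix.transpose_apply, checkInc_apply]
  rw [sum_tannerEdge H (fun a _ => (if i = a then 1 else 0) * (if i' = a then 1 else 0))]
  simp_rw [fun a => sum_ite_eq_one q (H a) (hrow a)]
  by_cases h : i = i'
  · subst h
    simp
  · simp [h]

lemma varInc_mul_transpose [DecidableEq β] (q : ℕ)
    (hcol : ∀ j, Nat.card {i // H i j = 1} = q + 1) :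
    varInc H * (varInc H)ᵀ = ((q : ℝ) + 1) • 1 := by
  classical
  ext j j'
  rw [Matrix.mul_apply]
  simp only [Matrix.transpose_apply, varInc_apply]
  rw [sum_tannerEdge H (fun _ b => (if j = b then 1 else 0) * (if j' = b then 1 else 0)),
    Finset.sum_comm]
  simp_rw [fun b => sum_ite_eq_one q (fun a => H a b) (hcol b)]
  by_cases h : j = j'
  · subst h
    simp
  · simp [h]

lemma checkInc_mul_varInc_transpose (hent : ∀ i j, H i j = 0 ∨ H i j = 1) :
    checkInc H * (varInc H)ᵀ = H := by
  classical
  ext i j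
  rw [Matrix.mul_apply]
  simp only [Matrix.transpose_apply, checkInc_apply, varInc_apply]
  rw [sum_tannerEdge H (fun a b => (if i = a then 1 else 0) * (if j = b then 1 else 0))]
  rw [Finset.sum_eq_single i, Finset.sum_eq_single j]
  · rcases hent i j with h | h <;> simp [h]
  · intro b _ hb; simp [hb.symm]
  · simp
  · intro b _ hb; simp [hb.symm]
  · simp

lemma card_tannerEdge :
    (Fintype.card (TannerEdge H) : ℝ) =
      ∑ i, ∑ j, open Classical in if H i j = 1 then (1 : ℝ) else 0 := by
  rw [← sum_tannerEdge H (fun _ _ => 1)]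
  simp

lemma card_mul_eq_card_tannerEdge (q : ℕ) (hrow : ∀ i, Nat.card {j // H i j = 1} = q + 1) :
    (Fintype.card α : ℝ) * (q + 1) = Fintype.card (TannerEdge H) := by
  classical
  rw [card_tannerEdge]
  simp_rw [fun a => sum_ite_eq_one q (H a) (hrow a)]
  simp
  ring

lemma card_mul_eq_card_tannerEdge' (q : ℕ) (hcol : ∀ j, Nat.card {i // H i j = 1} = q + 1) :
    (Fintype.card β : ℝ) * (q + 1) = Fintype.card (TannerEdge H) := by
  classical
  rw [card_tannerEdge, Finset.sum_comm]
  simp_rw [fun b => sum_ite_eq_one q (fun a => H a b) (hcol b)]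
  simp
  ring

lemma trace_mul_transpose_eq_card (hent : ∀ i j, H i j = 0 ∨ H i j = 1) :
    (H * Hᵀ).trace = Fintype.card (TannerEdge H) := by
  classical
  rw [card_tannerEdge, Matrix.trace]
  refine Finset.sum_congr rfl fun i _ => ?_
  rw [Matrix.diag_apply, Matrix.mul_apply]
  refine Finset.sum_congr rfl fun j _ => ?_
  rcases hent i j with h | h <;> simp [h]

end

/-- The roots of `ξ² + (q1 + q2) ξ + q1 q2` are `-q1` and `-q2`. -/
lemma eval_dickson_neg_add (q1 q2 : ℝ) (k : ℕ) :
    (Polynomial.dickson 1 (q1 * q2) k).eval (-(q1 + q2)) = (-q1) ^ k + (-q2) ^ k := by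
  induction k using Nat.twoStepInduction with
  | zero => simp; norm_num
  | one => simp; ring
  | more k h0 h1 =>
    rw [Polynomial.dickson_add_two]
    simp only [Polynomial.eval_sub, Polynomial.eval_mul, Polynomial.eval_X, Polynomial.eval_C, h0,
      h1]
    ring

/-- Theorem 3 of the paper: recursive formula for the number of `2k`-cycles of a
connected `(q1+1, q2+1)`-biregular Tanner graph in terms of the eigenvalues of
`H * Hᵀ - (q1 + q2) • 1`, the sums `S_{α,k}` being values of Dickson polynomials. -/
theorem cycle_count_recursive
    (q1 q2 m n : ℕ) (hq1 : 1 ≤ q1) (hq12 : q1 ≤ q2) (hq2 : 2 ≤ q2)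
    (hm : 0 < m) (hn : 0 < n)
    (H : Matrix (Fin m) (Fin n) ℝ)
    (hent : ∀ i j, H i j = 0 ∨ H i j = 1)
    (hcol : ∀ j, Nat.card {i : Fin m // H i j = 1} = q1 + 1)
    (hrow : ∀ i, Nat.card {j : Fin n // H i j = 1} = q2 + 1)
    (hconn : (tannerGraph H).Connected)
    (k : ℕ) (hk : 1 ≤ k) (hkg : (k : ℕ∞) < (tannerGraph H).egirth) :
    2 * (k : ℝ) * numCycles (tannerGraph H) k =
      ((n * (q1 + 1) : ℕ) : ℝ) - ((m : ℝ) + n)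
      + (-(q1 : ℝ)) ^ k * ((n : ℝ) - H.rank)
      + (-(q2 : ℝ)) ^ k * ((m : ℝ) - H.rank)
      + Matrix.trace (Polynomial.aeval
          (H * H.transpose - ((q1 : ℝ) + q2) • (1 : Matrix (Fin m) (Fin m) ℝ))
          (Polynomial.dickson 1 ((q1 : ℝ) * q2) k))
      - ((m : ℝ) - H.rank) *
          Polynomial.eval (-((q1 : ℝ) + q2)) (Polynomial.dickson 1 ((q1 : ℝ) * q2) k) := by
  classical
  have hG : (cycleCount (tannerGraph H) (2 * k) : ℝ) =
      2 * (((((varInc H)ᵀ * varInc H - 1) * ((checkInc H)ᵀ * checkInc H - 1)) ^ k).trace) := by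
    have hg : ((2 * k : ℕ) : ℕ∞) < 2 * (tannerGraph H).egirth := by
      revert hkg
      generalize (tannerGraph H).egirth = g
      induction g using ENat.recTopCoe with
      | top => intro _; rw [ENat.mul_top (by norm_num)]; exact ENat.natCast_lt_top _
      | coe g => intro h; norm_cast at h ⊢; omega
    let : Fintype (tannerGraph H).Dart := Fintype.ofFinite _
    rw [← card_nbSeq_eq_cycleCount _ (by omega) hg, card_nbSeq_eq_trace _ (by omega),
      ← trace_submatrix_pow (Equiv.ofBijective _ (tannerDart_bijective H)),
      ← trace_fromBlocks_offDiag_pow, ← relMatrix_tannerDart]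
    rfl
  -- The hypothesis `1 ≤ k` matters here: `numCycles` divides by `4 * k`.
  have hk0 : (k : ℝ) ≠ 0 := by positivity
  have hE := card_mul_eq_card_tannerEdge' H q1 hcol
  rw [trace_edge_pow (q1 : ℝ) q2 (by positivity) (checkInc H) (varInc H) H
    (checkInc_mul_transpose H q2 hrow) (varInc_mul_transpose H q1 hcol)
    (checkInc_mul_varInc_transpose H hent) (card_mul_eq_card_tannerEdge H q2 hrow) hE
    (trace_mul_transpose_eq_card H hent) k, ← hE] at hG
  simp only [Fintype.card_fin] at hG
  rw [numCycles, eval_dickson_neg_add, hG]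
  push_cast
  field_simp
  ring
end

section
/- Under the Tanner graph setup, define for integers j: E_j = trace((H Hᵀ − (q1+q2)·I_m)^j) − (m − μ)·(−(q1+q2))^j for j ≥ 0 (so E_0 = μ, and E_j equals the sum of the j-th powers of the eigenvalues α ≠ −(q1+q2) of H Hᵀ − (q1+q2)·I_m counted with multiplicity), and E_j = 0 for j < 0. Then for every integer k with 2 ≤ k ≤ 7 and (k : ℕ∞) < g: 2k·N_{2k} = |E|·(1 + ((−q1)^k − 1)/(q1+1) + ((−q2)^k − 1)/(q2+1)) − μ·((−q1)^k + (−q2)^k) + E_k − k·q1·q2·E_{k−2} + (k(k−3)/2)·q1²·q2²·E_{k−4} − (k² − 8k + 14)·q1³·q2³·E_{k−6}. (Here ((−q1)^k − 1)/(q1+1) = −Σ_{j=0}^{k−1}(−q1)^j is an integer, and similarly for q2.) -/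
/-!
Let `B` be the Hashimoto matrix of the Tanner graph: it is indexed by darts, and `B d e = 1` when
`e` starts where `d` ends and is not the reversal of `d`. Then `tr (B ^ L)` counts the closed walks
of length `L` that are cyclically non-backtracking.

*Counting cycles.* Every nonempty closed non-backtracking walk contains a cycle, so its length is at
least the girth `g` (`egirth_le_of_nb`). A closed cyclically non-backtracking walk of length
`2k < 2g` that repeats a vertex would split into two such closed walks, one of length at most
`k < g`; so it is a cycle (`isCycle_of_cyclic_nb`). Hence `C_{2k} = tr (B ^ (2k))`
(`cycleCount_eq_trace`).

*Computing the trace.* Write `B = T S - J`, where `S` and `T` are the start and end incidence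
matrices of the darts and `J` reverses darts. With `M_l = S B ^ l T` (non-backtracking walks of
length `l + 1`), adjacency matrix `a` and degree matrix `D`, simple identities between these
matrices yield `M_{l+2} = M_{l+1} a - M_l (D - 1)` and
`tr B^{l+3} = tr M_{l+2} - tr ((D - 1) M_l) + tr B^{l+1}` (`NBW_add_two`, `trace_B_add_three`).
For a biregular bipartite graph the `M_l` with `l` odd are block diagonal, and their blocks are
polynomials in `H Hᵀ - (q1 + q2)` and `Hᵀ H - (q1 + q2)` (`NBW_odd`). The power sums of these two
matrices differ by `(n - m) (-(q1 + q2)) ^ j` (`trace_shift_pow`), so `tr B^{2k}` becomes an explicit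
linear combination of the power sums of `H Hᵀ - (q1 + q2)`. In the claimed formula the rank of `H`
cancels, because the polynomial `α ^ k - k q1 q2 α ^ (k-2) + ...` takes the value
`(-q1) ^ k + (-q2) ^ k` at `α = -(q1 + q2)`; what remains is a polynomial identity for each
`k` from `2` to `7`.
-/

open Matrix Finset

namespace TannerCycles

/-! ### Non-backtracking walks and the girth -/

section Combinatorics

variable {V : Type*} {G : SimpleGraph V}

/-- The dart `e` may follow the dart `d` in a non-backtracking walk. -/
def NB (d e : G.Dart) : Prop := d.snd = e.fst ∧ e ≠ d.symm

/-- A walk that is not a path contains a nonempty closed subwalk. -/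
lemma exists_closed_of_not_isPath {u v : V} (p : G.Walk u v) (hp : ¬ p.IsPath) :
    ∃ (x : V) (a : G.Walk u x) (b : G.Walk x x) (c : G.Walk x v),
      0 < b.length ∧ p = a.append (b.append c) := by
  classical
  induction p with
  | nil => simp at hp
  | @cons u w v h p ih =>
    by_cases hpp : p.IsPath
    · have hu : u ∈ p.support := by
        by_contra hu
        exact hp ((SimpleGraph.Walk.cons_isPath_iff h p).2 ⟨hpp, hu⟩)
      refine ⟨u, .nil, .cons h (p.takeUntil u hu), p.dropUntil u hu, by simp, ?_⟩
      simp
    · obtain ⟨x, a, b, c, hb, rfl⟩ := ih hpp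
      exact ⟨x, .cons h a, b, c, hb, by simp⟩

lemma three_le_length_of_nb {v : V} (p : G.Walk v v) (h0 : 0 < p.length)
    (hnb : p.darts.IsChain NB) : 3 ≤ p.length := by
  match p, hnb with
  | .nil, _ => simp at h0
  | .cons h .nil, _ => exact absurd h (G.irrefl)
  | .cons h (.cons h' .nil), hnb =>
    simp [NB] at hnb
  | .cons h (.cons h' (.cons h'' q)), _ => simp

/-- A nonempty closed non-backtracking walk, with or without a tail, contains a cycle, so it is
at least as long as the girth. -/
lemma egirth_le_of_nb (N : ℕ) : ∀ {v : V} (p : G.Walk v v), p.length = N → 0 < p.length →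
    p.darts.IsChain NB → G.egirth ≤ (p.length : ℕ∞) := by
  induction N using Nat.strong_induction_on with
  | _ N ih =>
    intro v p hN h0 hnb
    by_cases hp : p.tail.IsPath
    · exact SimpleGraph.egirth_le_length
        (SimpleGraph.Walk.isCycle_iff_isPath_tail_and_le_length.2
          ⟨hp, three_le_length_of_nb p h0 hnb⟩)
    · obtain ⟨x, a, b, c, hb, habc⟩ := exists_closed_of_not_isPath _ hp
      have hlen : p.tail.length + 1 = p.length :=
        SimpleGraph.Walk.length_tail_add_one (by rw [← SimpleGraph.Walk.length_eq_zero_iff]; omega)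
      have hl2 : p.tail.length = a.length + (b.length + c.length) := by rw [habc]; simp
      have hd : p.darts.tail = a.darts ++ (b.darts ++ c.darts) := by
        rw [← SimpleGraph.Walk.darts_tail, habc]; simp
      have hbc : b.darts.IsChain NB := by
        refine hnb.tail.infix ?_
        rw [hd]
        exact ⟨a.darts, c.darts, by simp⟩
      refine (ih b.length (by omega) b rfl hb hbc).trans ?_
      exact_mod_cast (by omega : b.length ≤ p.length)

/-- A closed, cyclically non-backtracking walk of length less than twice the girth is a cycle:
otherwise it splits into two nonempty closed non-backtracking walks, one of them shorter than
the girth. -/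
lemma isCycle_of_cyclic_nb {k : ℕ} (hk : (k : ℕ∞) < G.egirth) {v : V} (p : G.Walk v v)
    (hlen : p.length = 2 * k) (h0 : 0 < k) (hnb : p.darts.IsChain NB)
    (hclose : ∀ x ∈ p.darts.getLast?, ∀ y ∈ p.darts.head?, NB x y) : p.IsCycle := by
  have h0' : 0 < p.length := by omega
  rw [SimpleGraph.Walk.isCycle_iff_isPath_tail_and_le_length]
  refine ⟨?_, three_le_length_of_nb p h0' hnb⟩
  by_contra hp
  cases p with
  | nil => simp at h0'
  | @cons _ w _ h q =>
    have hqp : ¬ q.IsPath := by simpa using hp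
    obtain ⟨x, a, b, c, hb, rfl⟩ := exists_closed_of_not_isPath _ hqp
    simp only [SimpleGraph.Walk.length_cons, SimpleGraph.Walk.length_append] at hlen
    have hbc : b.darts.IsChain NB := by
      refine hnb.infix ?_
      exact ⟨_ :: a.darts, c.darts, by simp; rfl⟩
    have h1 := egirth_le_of_nb _ b rfl hb hbc
    have h1' : k < b.length := by exact_mod_cast hk.trans_le h1
    have hr : (c.append (.cons h a)).darts.IsChain NB := by
      rw [SimpleGraph.Walk.darts_append]
      refine List.IsChain.append ?_ ?_ ?_
      · refine hnb.infix ⟨_ :: (a.darts ++ b.darts), [], by simp; rfl⟩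
      · refine hnb.infix ⟨[], b.darts ++ c.darts, by simp⟩
      · intro x hx y hy
        refine hclose x ?_ y ?_
        · have hc : c.darts ≠ [] := by
            rintro h; simp [h] at hx
          rw [SimpleGraph.Walk.darts_cons, SimpleGraph.Walk.darts_append,
            SimpleGraph.Walk.darts_append, ← List.append_assoc, ← List.cons_append,
            List.getLast?_append_of_ne_nil _ hc]
          exact hx
        · simpa using hy
    have h2 := egirth_le_of_nb _ (c.append (.cons h a)) rfl (by simp) hr
    have h2' : k < (c.append (.cons h a)).length := by exact_mod_cast hk.trans_le h2
    simp only [SimpleGraph.Walk.length_cons, SimpleGraph.Walk.length_append] at h2'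
    omega

/-- The darts of a cycle form a cyclically non-backtracking sequence. -/
lemma nb_of_isCycle {v : V} (p : G.Walk v v) (hp : p.IsCycle) :
    p.darts.IsChain NB ∧ ∀ x ∈ p.darts.getLast?, ∀ y ∈ p.darts.head?, NB x y := by
  have hnd : (p.darts.map SimpleGraph.Dart.edge).Nodup := hp.edges_nodup
  have h3 := hp.three_le_length
  rw [← SimpleGraph.Walk.length_darts] at h3
  have key : ∀ (i j : ℕ) (hi : i < p.darts.length) (hj : j < p.darts.length), i ≠ j →
      p.darts[j] ≠ p.darts[i].symm := by
    intro i j hi hj hij he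
    apply hij
    have := (hnd.getElem_inj_iff (i := i) (j := j) (hi := by simpa using hi)
      (hj := by simpa using hj)).1 (by simp [he])
    exact this
  constructor
  · rw [List.isChain_iff_getElem]
    intro i hi
    refine ⟨(List.isChain_iff_getElem.1 p.isChain_dartAdj_darts) i hi, key _ _ _ _ (by omega)⟩
  · intro x hx y hy
    rw [List.getLast?_eq_getElem?] at hx
    rw [List.head?_eq_getElem?] at hy
    obtain ⟨hi, rfl⟩ := List.getElem?_eq_some_iff.1 hx
    obtain ⟨hj, rfl⟩ := List.getElem?_eq_some_iff.1 hy
    refine ⟨?_, key _ _ _ _ (by omega)⟩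
    rw [SimpleGraph.Walk.darts_getElem_eq_getVert, SimpleGraph.Walk.darts_getElem_eq_getVert]
    simp only [SimpleGraph.Walk.length_darts] at h3 ⊢
    rw [show p.length - 1 + 1 = p.length by omega]
    simp

/-- A dart sequence that can follow the dart `a` is the dart sequence of a walk. -/
lemma exists_walk_of_chain (l : List G.Dart) : ∀ a : G.Dart, (a :: l).IsChain NB →
    ∃ w : G.Walk a.snd ((a :: l).getLast (by simp)).snd, w.darts = l := by
  induction l with
  | nil => intro a _; exact ⟨.nil, rfl⟩
  | cons d l ih =>
    intro a h
    rw [List.isChain_cons_cons] at h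
    obtain ⟨w, hw⟩ := ih d h.2
    have had : G.Adj a.snd d.snd := by rw [h.1.1]; exact d.adj
    refine ⟨(SimpleGraph.Walk.cons had w).copy rfl (by simp), ?_⟩
    simp only [SimpleGraph.Walk.darts_copy, SimpleGraph.Walk.darts_cons, hw]
    congr 1
    ext1
    exact Prod.ext h.1.1 rfl

variable [Fintype V] [DecidableEq V] [DecidableRel G.Adj]

instance : DecidableRel (NB (G := G)) := fun _ _ => inferInstanceAs (Decidable (_ ∧ _))

variable (G) in
/-- The dart sequences of length `L` that can follow the dart `a` in a non-backtracking walk and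
end with the dart `b` (where `b = a` if `L = 0`). -/
def nbLists : ℕ → G.Dart → G.Dart → Finset (List G.Dart)
  | 0, a, b => if a = b then {[]} else ∅
  | L + 1, a, b => (univ.filter (NB a)).biUnion fun c => (nbLists L c b).image (List.cons c)

lemma mem_nbLists (L : ℕ) : ∀ (a b : G.Dart) (l : List G.Dart), l ∈ nbLists G L a b ↔
    l.length = L ∧ (a :: l).IsChain NB ∧ (a :: l).getLast (by simp) = b := by
  induction L with
  | zero =>
    intro a b l
    rw [nbLists]
    split_ifs with h
    · subst h; constructor
      · intro h; simp at h; subst h; simp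
      · intro h; simpa using h.1
    · constructor
      · intro h; simp at h
      · rintro ⟨h1, h2, h3⟩
        rw [List.length_eq_zero_iff] at h1; subst h1; simp at h3; exact absurd h3 h
  | succ L ih =>
    intro a b l
    simp only [nbLists, mem_biUnion, mem_filter, mem_univ, true_and, mem_image, ih]
    constructor
    · rintro ⟨c, hac, l, ⟨h1, h2, h3⟩, rfl⟩
      exact ⟨by simp [h1], List.isChain_cons_cons.2 ⟨hac, h2⟩, by simpa using h3⟩
    · rintro ⟨h1, h2, h3⟩
      cases l with
      | nil => simp at h1
      | cons c l =>
        rw [List.isChain_cons_cons] at h2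
        exact ⟨c, h2.1, l, ⟨by simpa using h1, h2.2, by simpa using h3⟩, rfl⟩

variable (G) in
/-- The Hashimoto (non-backtracking) matrix, indexed by the darts of the graph. -/
def B : Matrix G.Dart G.Dart ℝ := Matrix.of fun d e => if NB d e then 1 else 0

lemma B_pow_apply (L : ℕ) : ∀ a b : G.Dart, (B G ^ L) a b = ((nbLists G L a b).card : ℝ) := by
  induction L with
  | zero =>
    intro a b
    rw [pow_zero, nbLists, Matrix.one_apply]
    split_ifs <;> simp
  | succ L ih =>
    intro a b
    rw [pow_succ', Matrix.mul_apply, nbLists, card_biUnion]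
    · rw [Finset.sum_filter]
      push_cast
      refine Finset.sum_congr rfl fun c _ => ?_
      rw [ih, B, Matrix.of_apply]
      split_ifs
      · rw [card_image_of_injective _ (List.cons_injective), one_mul]
      · simp
    · intro c _ d _ hcd
      rw [Function.onFun, Finset.disjoint_left]
      intro l hl hl'
      simp only [mem_image] at hl hl'
      obtain ⟨l1, _, rfl⟩ := hl
      obtain ⟨l2, _, h⟩ := hl'
      simp at h
      exact hcd h.1.symm

/-- Below twice the girth, the trace of a power of the Hashimoto matrix counts rooted oriented
cycles. -/
lemma cycleCount_eq_trace {k : ℕ} (hk0 : 0 < k) (hk : (k : ℕ∞) < G.egirth) :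
    (cycleCount G (2 * k) : ℝ) = Matrix.trace (B G ^ (2 * k)) := by
  have htr : Matrix.trace (B G ^ (2 * k)) =
      ((univ.biUnion fun a => nbLists G (2 * k) a a).card : ℝ) := by
    rw [card_biUnion]
    · simp [Matrix.trace, B_pow_apply]
    · intro a _ b _ hab
      rw [Function.onFun, Finset.disjoint_left]
      intro l hl hl'
      rw [mem_nbLists] at hl hl'
      have hne : l ≠ [] := by
        rintro rfl
        simp at hl
        omega
      apply hab
      rw [← hl.2.2, ← hl'.2.2, List.getLast_cons hne, List.getLast_cons hne]
  rw [htr, cycleCount, Nat.cast_inj, ← Fintype.card_coe, ← Nat.card_eq_fintype_card]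
  have hmem : ∀ p : {p : Σ v : V, G.Walk v v // p.2.length = 2 * k ∧ p.2.IsCycle},
      p.1.2.darts ∈ univ.biUnion fun a => nbLists G (2 * k) a a := by
    rintro ⟨⟨v, p⟩, hlen, hp⟩
    simp only at hlen hp ⊢
    have hne : p.darts ≠ [] := by
      intro h
      have := congrArg List.length h
      rw [SimpleGraph.Walk.length_darts, hlen, List.length_nil] at this
      omega
    obtain ⟨h1, h2⟩ := nb_of_isCycle p hp
    refine mem_biUnion.2 ⟨p.darts.getLast hne, mem_univ _, ?_⟩
    rw [mem_nbLists]
    refine ⟨by simpa using hlen, ?_, List.getLast_cons hne⟩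
    rw [List.isChain_cons]
    exact ⟨fun y hy => h2 _ (by simp [List.getLast?_eq_some_getLast hne]) y hy, h1⟩
  refine Nat.card_congr (Equiv.ofBijective (fun p => ⟨p.1.2.darts, hmem p⟩) ⟨?_, ?_⟩)
  · rintro ⟨⟨v, p⟩, hlen, hp⟩ ⟨⟨w, q⟩, hlen', hq⟩ h
    have hd : p.darts = q.darts := congrArg Subtype.val h
    have hvw : v = w := by
      cases p with
      | nil => simp at hlen; omega
      | cons _ _ =>
        cases q with
        | nil => simp at hlen'; omega
        | cons _ _ => simp at hd; exact hd.1.1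
    subst hvw
    obtain rfl := SimpleGraph.Walk.darts_injective hd
    rfl
  · rintro ⟨l, hl⟩
    obtain ⟨a, -, ha⟩ := mem_biUnion.1 hl
    rw [mem_nbLists] at ha
    obtain ⟨h1, h2, h3⟩ := ha
    obtain ⟨w, hw⟩ := exists_walk_of_chain l a h2
    have hcl : ((a :: l).getLast (by simp)).snd = a.snd := by rw [h3]
    have hne : l ≠ [] := by
      rintro rfl
      simp at h1
      omega
    have hw' : (w.copy rfl hcl).darts = l := by simpa using hw
    have hlen : (w.copy rfl hcl).length = 2 * k := by
      rw [← SimpleGraph.Walk.length_darts, hw', h1]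
    refine ⟨⟨⟨a.snd, w.copy rfl hcl⟩, hlen, ?_⟩, Subtype.ext hw'⟩
    refine isCycle_of_cyclic_nb hk _ hlen hk0 (by rw [hw']; exact h2.tail) ?_
    rw [hw']
    intro x hx y hy
    rw [List.getLast_cons hne] at h3
    rw [List.getLast?_eq_some_getLast hne, h3] at hx
    obtain rfl : a = x := by simpa using hx
    exact (List.isChain_cons.1 h2).1 y hy

end Combinatorics

/-! ### Recurrences for the Hashimoto matrix -/

section Hashimoto

variable {V : Type*} (G : SimpleGraph V) [Fintype V] [DecidableEq V] [DecidableRel G.Adj]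

/-- Incidence of vertices with the darts they start. -/
def S : Matrix V G.Dart ℝ := Matrix.of fun v d => if d.fst = v then 1 else 0

/-- Incidence of darts with the vertex they end at. -/
def T : Matrix G.Dart V ℝ := Matrix.of fun d v => if d.snd = v then 1 else 0

/-- The permutation matrix of dart reversal. -/
def J : Matrix G.Dart G.Dart ℝ := Matrix.of fun d e => if e = d.symm then 1 else 0

/-- The diagonal matrix of vertex degrees. -/
def Dg : Matrix V V ℝ := Matrix.diagonal fun v => (G.degree v : ℝ)

/-- `NBW G l` counts the non-backtracking walks of length `l + 1` between pairs of vertices. -/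
def NBW (l : ℕ) : Matrix V V ℝ := S G * B G ^ l * T G

lemma B_eq : B G = T G * S G - J G := by
  ext d e
  simp only [B, T, S, J, NB, Matrix.sub_apply, Matrix.mul_apply, Matrix.of_apply]
  by_cases h : e = d.symm
  · subst h; simp
  · simp [h, eq_comm]

lemma J_mul {ι : Type*} (M : Matrix G.Dart ι ℝ) : J G * M = Matrix.of fun d i => M d.symm i := by
  ext d i
  simp [J, Matrix.mul_apply]

lemma J_mul_T : J G * T G = (S G)ᵀ := by
  rw [J_mul]; ext d v; simp [T, S]

lemma J_mul_St : J G * (S G)ᵀ = T G := by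
  rw [J_mul]; ext d v; simp [T, S]

lemma J_transpose : (J G)ᵀ = J G := by
  ext d e
  simp only [J, Matrix.transpose_apply, Matrix.of_apply]
  congr 1
  apply propext
  constructor <;> (rintro rfl; simp)

lemma J_mul_J : J G * J G = 1 := by
  rw [J_mul]; ext d e
  simp [J, Matrix.one_apply, eq_comm]

lemma S_mul_J : S G * J G = (T G)ᵀ := by
  rw [← J_mul_St, Matrix.transpose_mul, Matrix.transpose_transpose, J_transpose]

lemma Tt_mul_J : (T G)ᵀ * J G = S G := by
  rw [← S_mul_J, Matrix.mul_assoc, J_mul_J, Matrix.mul_one]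

lemma S_mul_T : S G * T G = G.adjMatrix ℝ := by
  ext u v
  simp only [S, T, Matrix.mul_apply, Matrix.of_apply, SimpleGraph.adjMatrix_apply]
  split_ifs with h
  · rw [Finset.sum_eq_single (⟨(u, v), h⟩ : G.Dart)]
    · simp
    · intro d _ hd
      by_cases h1 : d.fst = u
      · by_cases h2 : d.snd = v
        · exact absurd (SimpleGraph.Dart.ext _ _ (Prod.ext h1 h2)) hd
        · simp [h2]
      · simp [h1]
    · simp
  · refine Finset.sum_eq_zero fun d _ => ?_
    by_cases h1 : d.fst = u
    · by_cases h2 : d.snd = v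
      · subst h1 h2; exact absurd d.adj h
      · simp [h2]
    · simp [h1]

lemma S_mul_St : S G * (S G)ᵀ = Dg G := by
  ext u v
  simp only [S, Dg, Matrix.mul_apply, Matrix.of_apply, Matrix.transpose_apply,
    Matrix.diagonal_apply]
  split_ifs with h
  · subst h
    rw [← G.dart_fst_fiber_card_eq_degree u, Finset.card_filter]
    push_cast
    exact Finset.sum_congr rfl fun d _ => by split_ifs <;> simp
  · refine Finset.sum_eq_zero fun d _ => ?_
    by_cases h1 : d.fst = u
    · subst h1; simp [h]
    · simp [h1]

lemma Tt_mul_T : (T G)ᵀ * T G = Dg G := by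
  rw [← J_mul_St, Matrix.transpose_mul, Matrix.transpose_transpose, J_transpose,
    Matrix.mul_assoc, ← Matrix.mul_assoc (J G), J_mul_J, Matrix.one_mul, S_mul_St]

lemma B_mul_T : B G * T G = T G * G.adjMatrix ℝ - (S G)ᵀ := by
  rw [B_eq, Matrix.sub_mul, Matrix.mul_assoc, S_mul_T, J_mul_T]

lemma B_mul_St : B G * (S G)ᵀ = T G * (Dg G - 1) := by
  rw [B_eq, Matrix.sub_mul, Matrix.mul_assoc, S_mul_St, J_mul_St, Matrix.mul_sub, Matrix.mul_one]

lemma Tt_mul_B : (T G)ᵀ * B G = (Dg G - 1) * S G := by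
  rw [B_eq, Matrix.mul_sub, ← Matrix.mul_assoc, Tt_mul_T, Tt_mul_J, Matrix.sub_mul, Matrix.one_mul]

lemma B_mul_J : B G * J G = T G * (T G)ᵀ - 1 := by
  rw [B_eq, Matrix.sub_mul, Matrix.mul_assoc, S_mul_J, J_mul_J]

lemma NBW_zero : NBW G 0 = G.adjMatrix ℝ := by
  simp [NBW, S_mul_T]

lemma NBW_one : NBW G 1 = G.adjMatrix ℝ * G.adjMatrix ℝ - Dg G := by
  rw [NBW, pow_one, Matrix.mul_assoc, B_mul_T, Matrix.mul_sub, ← Matrix.mul_assoc, S_mul_T,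
    S_mul_St]

lemma NBW_add_two (l : ℕ) :
    NBW G (l + 2) = NBW G (l + 1) * G.adjMatrix ℝ - NBW G l * (Dg G - 1) := by
  have h : B G * (B G * T G) = B G * T G * G.adjMatrix ℝ - T G * (Dg G - 1) := by
    conv_lhs => rw [B_mul_T]
    rw [Matrix.mul_sub, B_mul_St, Matrix.mul_assoc]
  simp only [NBW]
  rw [pow_add, pow_two, pow_succ]
  simp only [Matrix.mul_assoc] at h ⊢
  rw [h]
  simp only [Matrix.mul_sub]

/-- Closed non-backtracking walks with a tail arise by adding one step at both ends of a shorter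
closed non-backtracking walk; this is the resulting recurrence for the tailless ones. -/
lemma trace_B_add_three (l : ℕ) :
    Matrix.trace (B G ^ (l + 3)) = Matrix.trace (NBW G (l + 2))
      - Matrix.trace ((Dg G - 1) * NBW G l) + Matrix.trace (B G ^ (l + 1)) := by
  have h1 : Matrix.trace (B G ^ (l + 3)) =
      Matrix.trace (NBW G (l + 2)) - Matrix.trace (B G ^ (l + 2) * J G) := by
    rw [pow_succ]
    nth_rewrite 2 [B_eq]
    rw [Matrix.mul_sub, Matrix.trace_sub, NBW, ← Matrix.mul_assoc, Matrix.trace_mul_comm,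
      ← Matrix.mul_assoc]
  have h2 : Matrix.trace (B G ^ (l + 2) * J G) =
      Matrix.trace ((Dg G - 1) * NBW G l) - Matrix.trace (B G ^ (l + 1)) := by
    rw [pow_succ, Matrix.mul_assoc, B_mul_J, Matrix.mul_sub, Matrix.trace_sub, Matrix.mul_one,
      ← Matrix.mul_assoc, Matrix.trace_mul_comm, NBW, pow_succ', ← Matrix.mul_assoc,
      ← Matrix.mul_assoc, Tt_mul_B]
    simp only [Matrix.mul_assoc]
  rw [h1, h2]; ring

lemma trace_B_two : Matrix.trace (B G ^ 2) = 0 := by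
  rw [pow_two, Matrix.trace]
  refine Finset.sum_eq_zero fun d _ => ?_
  rw [Matrix.diag_apply, Matrix.mul_apply]
  refine Finset.sum_eq_zero fun e _ => ?_
  rw [B, Matrix.of_apply, Matrix.of_apply]
  split_ifs with h1 h2
  · exact absurd (SimpleGraph.Dart.ext _ _ (Prod.ext h1.1.symm h2.1)) h1.2
  all_goals simp

end Hashimoto

/-! ### The Tanner graph of a biregular matrix -/

section Tanner

lemma tannerGraph_adj_inl_inr {α β : Type*} (H : Matrix α β ℝ) (i : α) (j : β) :
    (tannerGraph H).Adj (Sum.inl i) (Sum.inr j) ↔ H i j = 1 := by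
  simp [tannerGraph, SimpleGraph.fromRel_adj]

lemma tannerGraph_adj_inl_inl {α β : Type*} (H : Matrix α β ℝ) (i j : α) :
    ¬ (tannerGraph H).Adj (Sum.inl i) (Sum.inl j) := by
  simp [tannerGraph, SimpleGraph.fromRel_adj]

lemma tannerGraph_adj_inr_inr {α β : Type*} (H : Matrix α β ℝ) (i j : β) :
    ¬ (tannerGraph H).Adj (Sum.inr i) (Sum.inr j) := by
  simp [tannerGraph, SimpleGraph.fromRel_adj]

variable {m n : ℕ} (H : Matrix (Fin m) (Fin n) ℝ)

/-- Counting the ones of `H` by rows and by columns. -/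
lemma ones_count {q1 q2 : ℕ} (hcol : ∀ j, Nat.card {i : Fin m // H i j = 1} = q1 + 1)
    (hrow : ∀ i, Nat.card {j : Fin n // H i j = 1} = q2 + 1) :
    (n : ℝ) * (q1 + 1) = m * (q2 + 1) := by
  classical
  have h : ∑ i, Nat.card {j : Fin n // H i j = 1} = ∑ j, Nat.card {i : Fin m // H i j = 1} := by
    simp only [Nat.card_eq_fintype_card, Fintype.card_subtype, Finset.card_filter]
    exact Finset.sum_comm
  simp only [hcol, hrow, sum_const, card_univ, Fintype.card_fin, smul_eq_mul] at h
  exact_mod_cast h.symm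

variable [DecidableRel (tannerGraph H).Adj]

lemma adjMatrix_tanner (hent : ∀ i j, H i j = 0 ∨ H i j = 1) :
    (tannerGraph H).adjMatrix ℝ = Matrix.fromBlocks 0 H Hᵀ 0 := by
  have key : ∀ i j, (if H i j = 1 then (1 : ℝ) else 0) = H i j := by
    intro i j
    rcases hent i j with h | h <;> simp [h]
  ext u v
  rw [SimpleGraph.adjMatrix_apply]
  rcases u with i | i <;> rcases v with j | j
  · simp [tannerGraph_adj_inl_inl]
  · simp [tannerGraph_adj_inl_inr, key]
  · simp [SimpleGraph.adj_comm _ (Sum.inr i), tannerGraph_adj_inl_inr, key]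
  · simp [tannerGraph_adj_inr_inr]

lemma degree_inl {q2 : ℕ} (hrow : ∀ i, Nat.card {j : Fin n // H i j = 1} = q2 + 1) (i : Fin m) :
    (tannerGraph H).degree (Sum.inl i) = q2 + 1 := by
  rw [← hrow i, ← SimpleGraph.card_neighborSet_eq_degree, ← Nat.card_eq_fintype_card]
  refine (Nat.card_congr (Equiv.ofBijective
    (fun j => ⟨Sum.inr j.1, (tannerGraph_adj_inl_inr H i j.1).2 j.2⟩) ⟨?_, ?_⟩)).symm
  · intro a b h
    simpa [Subtype.ext_iff] using h
  · rintro ⟨u | j, hu⟩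
    · exact absurd hu (tannerGraph_adj_inl_inl H i u)
    · exact ⟨⟨j, (tannerGraph_adj_inl_inr H i j).1 hu⟩, rfl⟩

lemma degree_inr {q1 : ℕ} (hcol : ∀ j, Nat.card {i : Fin m // H i j = 1} = q1 + 1) (j : Fin n) :
    (tannerGraph H).degree (Sum.inr j) = q1 + 1 := by
  rw [← hcol j, ← SimpleGraph.card_neighborSet_eq_degree, ← Nat.card_eq_fintype_card]
  refine (Nat.card_congr (Equiv.ofBijective
    (fun i => ⟨Sum.inl i.1, ((tannerGraph_adj_inl_inr H i.1 j).2 i.2).symm⟩) ⟨?_, ?_⟩)).symm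
  · intro a b h
    simpa [Subtype.ext_iff] using h
  · rintro ⟨i | u, hu⟩
    · exact ⟨⟨i, (tannerGraph_adj_inl_inr H i j).1 (SimpleGraph.Adj.symm hu)⟩, rfl⟩
    · exact absurd hu (tannerGraph_adj_inr_inr H j u)

lemma Dg_tanner {q1 q2 : ℕ} (hcol : ∀ j, Nat.card {i : Fin m // H i j = 1} = q1 + 1)
    (hrow : ∀ i, Nat.card {j : Fin n // H i j = 1} = q2 + 1) :
    Dg (tannerGraph H) = Matrix.fromBlocks (((q2 : ℝ) + 1) • 1) 0 0 (((q1 : ℝ) + 1) • 1) := by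
  ext u v
  rw [Dg, Matrix.diagonal_apply]
  rcases u with i | i <;> rcases v with j | j
  · simp [degree_inl H hrow, Matrix.one_apply]
  · simp
  · simp
  · simp [degree_inr H hcol, Matrix.one_apply]

/-- The matrices, as polynomials in `Z`, counting the non-backtracking walks of length `2(j + 1)`
within one side of a biregular bipartite graph. The vertices of that side have degree `b + 1`, those
of the other side `a + 1`, and `Z` is the block of the squared adjacency matrix on that side,
shifted by `-(a + b)`. -/
def nbPoly {ι : Type*} [Fintype ι] [DecidableEq ι] (a b : ℝ) (Z : Matrix ι ι ℝ) :
    ℕ → Matrix ι ι ℝ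
  | 0 => Z + (a - 1) • 1
  | 1 => (Z + (a - 1) • 1) * Z - (a * (b + 1)) • 1
  | j + 2 => nbPoly a b Z (j + 1) * Z - (a * b) • nbPoly a b Z j

lemma fromBlocks_sub' {α β : Type*} (A A' : Matrix α α ℝ) (C C' : Matrix α β ℝ)
    (D D' : Matrix β α ℝ) (E E' : Matrix β β ℝ) : Matrix.fromBlocks A C D E - Matrix.fromBlocks A' C' D' E' =
      Matrix.fromBlocks (A - A') (C - C') (D - D') (E - E') := by
  ext (i | i) (j | j) <;> simp

lemma trace_fromBlocks' {α β : Type*} [Fintype α] [Fintype β] (A : Matrix α α ℝ)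
    (C : Matrix α β ℝ) (D : Matrix β α ℝ) (E : Matrix β β ℝ) :
    Matrix.trace (Matrix.fromBlocks A C D E) = Matrix.trace A + Matrix.trace E := by
  simp [Matrix.trace]

/-- The two-step recurrence for non-backtracking walks. It closes up because moving across an edge
swaps the two vertex degrees. -/
lemma NBW_add_four {q1 q2 : ℕ} (hent : ∀ i j, H i j = 0 ∨ H i j = 1)
    (hcol : ∀ j, Nat.card {i : Fin m // H i j = 1} = q1 + 1)
    (hrow : ∀ i, Nat.card {j : Fin n // H i j = 1} = q2 + 1) (l : ℕ) :
    NBW (tannerGraph H) (l + 4) = NBW (tannerGraph H) (l + 2) *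
      Matrix.fromBlocks (H * Hᵀ - ((q1 : ℝ) + q2) • 1) 0 0 (Hᵀ * H - ((q1 : ℝ) + q2) • 1)
      - ((q1 : ℝ) * q2) • NBW (tannerGraph H) l := by
  have h4 := NBW_add_two (tannerGraph H) (l + 2)
  have h3 := NBW_add_two (tannerGraph H) (l + 1)
  have h2 := NBW_add_two (tannerGraph H) l
  set a := (tannerGraph H).adjMatrix ℝ with ha
  set q := Dg (tannerGraph H) - 1 with hq
  rw [adjMatrix_tanner H hent] at ha
  rw [Dg_tanner H hcol hrow, ← Matrix.fromBlocks_one, fromBlocks_sub'] at hq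
  -- `q'` exchanges the two values on the diagonal of `q`
  set q' : Matrix (Fin m ⊕ Fin n) (Fin m ⊕ Fin n) ℝ :=
    Matrix.fromBlocks ((q1 : ℝ) • 1) 0 0 ((q2 : ℝ) • 1) with hq'
  have e1 : q * a = a * q' := by
    rw [hq, ha, hq', Matrix.fromBlocks_multiply, Matrix.fromBlocks_multiply]
    simp [add_smul]
  have e2 : q * q' = ((q1 : ℝ) * q2) • 1 := by
    rw [hq, hq', Matrix.fromBlocks_multiply, ← Matrix.fromBlocks_one, Matrix.fromBlocks_smul]
    simp [add_smul, smul_smul, mul_comm]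
  have e3 : Matrix.fromBlocks (H * Hᵀ - ((q1 : ℝ) + q2) • 1) 0 0
      (Hᵀ * H - ((q1 : ℝ) + q2) • 1) = a * a - q - q' := by
    rw [hq, ha, hq', Matrix.fromBlocks_multiply, fromBlocks_sub', fromBlocks_sub']
    simp [add_smul]
    constructor <;> abel
  have e4 : NBW (tannerGraph H) (l + 1) * q * a
      = NBW (tannerGraph H) (l + 2) * q' + ((q1 : ℝ) * q2) • NBW (tannerGraph H) l := by
    rw [Matrix.mul_assoc, e1, h2, Matrix.sub_mul, Matrix.mul_assoc _ q q', e2, Matrix.mul_assoc]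
    simp
  rw [h4, h3, e3, Matrix.sub_mul, e4]
  simp only [Matrix.mul_sub, Matrix.mul_assoc]
  abel

/-- Non-backtracking walks of even length stay on one side of the Tanner graph. -/
lemma NBW_odd {q1 q2 : ℕ} (hent : ∀ i j, H i j = 0 ∨ H i j = 1)
    (hcol : ∀ j, Nat.card {i : Fin m // H i j = 1} = q1 + 1)
    (hrow : ∀ i, Nat.card {j : Fin n // H i j = 1} = q2 + 1) (j : ℕ) :
    NBW (tannerGraph H) (2 * j + 1) = Matrix.fromBlocks
      (nbPoly (q1 : ℝ) q2 (H * Hᵀ - ((q1 : ℝ) + q2) • 1) j) 0 0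
      (nbPoly (q2 : ℝ) q1 (Hᵀ * H - ((q1 : ℝ) + q2) • 1) j) := by
  have h1 : NBW (tannerGraph H) 1 = Matrix.fromBlocks
      (nbPoly (q1 : ℝ) q2 (H * Hᵀ - ((q1 : ℝ) + q2) • 1) 0) 0 0
      (nbPoly (q2 : ℝ) q1 (Hᵀ * H - ((q1 : ℝ) + q2) • 1) 0) := by
    rw [NBW_one, adjMatrix_tanner H hent, Dg_tanner H hcol hrow, Matrix.fromBlocks_multiply,
      fromBlocks_sub']
    simp only [nbPoly, Matrix.fromBlocks_inj]
    refine ⟨?_, by simp, by simp, ?_⟩ <;> simp <;> module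
  induction j using Nat.strong_induction_on with
  | _ j ih =>
    match j with
    | 0 => exact h1
    | 1 =>
      rw [show 2 * 1 + 1 = 1 + 2 from rfl, NBW_add_two, NBW_add_two, h1, NBW_zero,
        adjMatrix_tanner H hent, Dg_tanner H hcol hrow, ← Matrix.fromBlocks_one]
      simp only [fromBlocks_sub', Matrix.fromBlocks_multiply, nbPoly, Matrix.fromBlocks_inj]
      refine ⟨?_, by simp, by simp, ?_⟩ <;>
      · simp [Matrix.mul_sub, Matrix.sub_mul, Matrix.add_mul, Matrix.mul_assoc]
        module
    | j + 2 =>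
      rw [show 2 * (j + 2) + 1 = 2 * j + 1 + 4 by ring, NBW_add_four H hent hcol hrow,
        show 2 * j + 1 + 2 = 2 * (j + 1) + 1 by ring, ih (j + 1) (by omega), ih j (by omega),
        Matrix.fromBlocks_multiply, Matrix.fromBlocks_smul, fromBlocks_sub']
      simp [nbPoly, mul_comm (q2 : ℝ)]

/-- The recurrence for the number of closed cyclically non-backtracking walks of even length, each
counted with a base point and an orientation. -/
lemma trace_B_even {q1 q2 : ℕ} (hent : ∀ i j, H i j = 0 ∨ H i j = 1)
    (hcol : ∀ j, Nat.card {i : Fin m // H i j = 1} = q1 + 1)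
    (hrow : ∀ i, Nat.card {j : Fin n // H i j = 1} = q2 + 1) (j : ℕ) :
    let F := fun j => Matrix.trace (nbPoly (q1 : ℝ) q2 (H * Hᵀ - ((q1 : ℝ) + q2) • 1) j)
    let F' := fun j => Matrix.trace (nbPoly (q2 : ℝ) q1 (Hᵀ * H - ((q1 : ℝ) + q2) • 1) j)
    Matrix.trace (B (tannerGraph H) ^ (2 * (j + 2))) =
      F (j + 1) + F' (j + 1) - (q2 * F j + q1 * F' j) +
        Matrix.trace (B (tannerGraph H) ^ (2 * (j + 1))) := by
  intro F F'
  rw [show 2 * (j + 2) = 2 * j + 1 + 3 by ring, trace_B_add_three,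
    show 2 * j + 1 + 2 = 2 * (j + 1) + 1 by ring, NBW_odd H hent hcol hrow,
    NBW_odd H hent hcol hrow, Dg_tanner H hcol hrow, ← Matrix.fromBlocks_one,
    fromBlocks_sub', Matrix.fromBlocks_multiply, trace_fromBlocks',
    trace_fromBlocks']
  simp [add_smul, F, F', mul_add]

end Tanner

/-! ### Power sums -/

section PowerSums

/-- The numbers `tr (nbPoly a b Z j * Z ^ i)` in terms of the power sums `z i = tr (Z ^ i)`. -/
def nbSum (a b : ℝ) (z : ℕ → ℝ) : ℕ → ℕ → ℝ
  | 0, i => z (i + 1) + (a - 1) * z i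
  | 1, i => z (i + 2) + (a - 1) * z (i + 1) - a * (b + 1) * z i
  | j + 2, i => nbSum a b z (j + 1) (i + 1) - a * b * nbSum a b z j i

lemma trace_nbPoly_mul_pow {ι : Type*} [Fintype ι] [DecidableEq ι] (a b : ℝ) (Z : Matrix ι ι ℝ)
    (j : ℕ) : ∀ i, Matrix.trace (nbPoly a b Z j * Z ^ i) =
      nbSum a b (fun i => Matrix.trace (Z ^ i)) j i := by
  induction j using Nat.strong_induction_on with
  | _ j ih =>
    intro i
    match j with
    | 0 => simp [nbPoly, nbSum, Matrix.add_mul, pow_succ']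
    | 1 => simp [nbPoly, nbSum, Matrix.add_mul, Matrix.sub_mul, pow_succ', Matrix.mul_assoc]
    | j + 2 =>
      rw [nbSum, ← ih (j + 1) (by omega), ← ih j (by omega)]
      simp [nbPoly, Matrix.sub_mul, pow_succ', Matrix.mul_assoc]

lemma trace_nbPoly {ι : Type*} [Fintype ι] [DecidableEq ι] (a b : ℝ) (Z : Matrix ι ι ℝ) (j : ℕ) :
    Matrix.trace (nbPoly a b Z j) = nbSum a b (fun i => Matrix.trace (Z ^ i)) j 0 := by
  rw [← trace_nbPoly_mul_pow, pow_zero, Matrix.mul_one]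

lemma trace_H_mul_Ht {m n : ℕ} {H : Matrix (Fin m) (Fin n) ℝ} {q2 : ℕ}
    (hent : ∀ i j, H i j = 0 ∨ H i j = 1)
    (hrow : ∀ i, Nat.card {j : Fin n // H i j = 1} = q2 + 1) :
    Matrix.trace (H * Hᵀ) = m * ((q2 : ℝ) + 1) := by
  classical
  have h : ∀ i, (H * Hᵀ) i i = (q2 : ℝ) + 1 := by
    intro i
    have h1 : (q2 : ℝ) + 1 = ((Nat.card {j : Fin n // H i j = 1} : ℕ) : ℝ) := by
      rw [hrow]; push_cast; rfl
    rw [h1, Nat.card_eq_fintype_card, Fintype.card_subtype, Finset.card_filter, Matrix.mul_apply]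
    push_cast
    refine Finset.sum_congr rfl fun j _ => ?_
    rcases hent i j with h | h <;> simp [h]
  simp [Matrix.trace, h, mul_add]

/-- `H Hᵀ` and `Hᵀ H` have the same nonzero spectrum, so the power sums of their shifts differ
only through the multiplicity of the eigenvalue `0`. -/
lemma trace_shift_pow {m n : ℕ} (H : Matrix (Fin m) (Fin n) ℝ) (s : ℝ) (j : ℕ) :
    Matrix.trace ((Hᵀ * H - s • 1) ^ j) =
      Matrix.trace ((H * Hᵀ - s • 1) ^ j) + ((n : ℝ) - m) * (-s) ^ j := by
  have hc : ∀ j, Hᵀ * (H * Hᵀ - s • 1) ^ j = (Hᵀ * H - s • 1) ^ j * Hᵀ := by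
    intro j
    induction j with
    | zero => simp
    | succ j ih =>
      rw [pow_succ, ← Matrix.mul_assoc, ih, pow_succ, Matrix.mul_assoc, Matrix.mul_assoc]
      congr 1
      simp [Matrix.mul_sub, Matrix.sub_mul, Matrix.mul_assoc]
  induction j with
  | zero => simp
  | succ j ih =>
    rw [pow_succ, pow_succ, Matrix.mul_sub, Matrix.mul_sub, Matrix.trace_sub, Matrix.trace_sub,
      ← Matrix.mul_assoc, ← hc, Matrix.mul_assoc, Matrix.trace_mul_comm, Matrix.mul_assoc]
    simp only [Matrix.mul_smul, Matrix.mul_one, Matrix.trace_smul, ih, smul_eq_mul]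
    ring

end PowerSums

end TannerCycles

/-- Corollary 2 of the paper: the formula for `N_{2k}`, `2 ≤ k ≤ 7`, in terms of the
power sums `E_j` of the eigenvalues `α ≠ -(q1+q2)` of `H * Hᵀ - (q1+q2) • 1`. -/
theorem cycle_count_in_terms_of_E
    (q1 q2 m n : ℕ) (hq1 : 1 ≤ q1) (hq12 : q1 ≤ q2) (hq2 : 2 ≤ q2)
    (hm : 0 < m) (hn : 0 < n)
    (H : Matrix (Fin m) (Fin n) ℝ)
    (hent : ∀ i j, H i j = 0 ∨ H i j = 1)
    (hcol : ∀ j, Nat.card {i : Fin m // H i j = 1} = q1 + 1)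
    (hrow : ∀ i, Nat.card {j : Fin n // H i j = 1} = q2 + 1)
    (hconn : (tannerGraph H).Connected)
    (k : ℕ) (hk2 : 2 ≤ k) (hk7 : k ≤ 7) (hkg : (k : ℕ∞) < (tannerGraph H).egirth) :
    let s : ℝ := (q1 : ℝ) + q2
    let μ : ℝ := (H.rank : ℝ)
    let A : Matrix (Fin m) (Fin m) ℝ := H * H.transpose - s • 1
    let E : ℤ → ℝ := fun j =>
      if 0 ≤ j then Matrix.trace (A ^ j.toNat) - ((m : ℝ) - μ) * (-s) ^ j.toNat else 0
    2 * (k : ℝ) * numCycles (tannerGraph H) k =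
      ((n * (q1 + 1) : ℕ) : ℝ) *
          (1 + ((-(q1 : ℝ)) ^ k - 1) / ((q1 : ℝ) + 1) + ((-(q2 : ℝ)) ^ k - 1) / ((q2 : ℝ) + 1))
      - μ * ((-(q1 : ℝ)) ^ k + (-(q2 : ℝ)) ^ k)
      + E k
      - (k : ℝ) * ((q1 : ℝ) * q2) * E ((k : ℤ) - 2)
      + ((k : ℝ) * ((k : ℝ) - 3) / 2) * ((q1 : ℝ) ^ 2 * (q2 : ℝ) ^ 2) * E ((k : ℤ) - 4)
      - ((k : ℝ) ^ 2 - 8 * k + 14) * ((q1 : ℝ) ^ 3 * (q2 : ℝ) ^ 3) * E ((k : ℤ) - 6) := by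
  classical
  intro s μ A E
  have hC := TannerCycles.cycleCount_eq_trace (by omega : 0 < k) hkg
  have hN : 2 * (k : ℝ) * numCycles (tannerGraph H) k =
      Matrix.trace (TannerCycles.B (tannerGraph H) ^ (2 * k)) / 2 := by
    have : (k : ℝ) ≠ 0 := by exact_mod_cast (by omega : k ≠ 0)
    rw [numCycles, hC]
    field_simp
    ring
  have hmn := TannerCycles.ones_count H hcol hrow
  have hedge : ((n * (q1 + 1) : ℕ) : ℝ) *
      (1 + ((-(q1 : ℝ)) ^ k - 1) / ((q1 : ℝ) + 1) + ((-(q2 : ℝ)) ^ k - 1) / ((q2 : ℝ) + 1)) =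
      n * (q1 + 1) + n * ((-(q1 : ℝ)) ^ k - 1) + m * ((-(q2 : ℝ)) ^ k - 1) := by
    have h1 : (q1 : ℝ) + 1 ≠ 0 := by positivity
    have h2 : (q2 : ℝ) + 1 ≠ 0 := by positivity
    push_cast
    field_simp
    linear_combination (((-(q2 : ℝ)) ^ k - 1)) * hmn
  rw [hN, hedge]
  have hstep := TannerCycles.trace_B_even H hent hcol hrow
  simp only [TannerCycles.trace_nbPoly, TannerCycles.trace_shift_pow] at hstep
  have hE : ∀ j : ℕ, E (j : ℤ) = Matrix.trace (A ^ j) - ((m : ℝ) - μ) * (-s) ^ j := by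
    intro j
    simp [E]
  have hE0 : ∀ j : ℤ, j < 0 → E j = 0 := fun j hj => if_neg (by omega)
  have hz0 : Matrix.trace (A ^ 0) = (m : ℝ) := by simp
  have hz1 : Matrix.trace (A ^ 1) = (m : ℝ) * (1 - q1) := by
    simp only [pow_one, A, Matrix.trace_sub, TannerCycles.trace_H_mul_Ht hent hrow,
      Matrix.trace_smul, Matrix.trace_one, Fintype.card_fin, s, smul_eq_mul]
    ring
  have hB2 := TannerCycles.trace_B_two (tannerGraph H)
  generalize TannerCycles.B (tannerGraph H) = B at *
  change ∀ j : ℕ, _ = TannerCycles.nbSum _ _ (fun i => (A ^ i).trace) _ _ +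
    TannerCycles.nbSum _ _ (fun i => (A ^ i).trace + _) _ _ -
    (_ * TannerCycles.nbSum _ _ (fun i => (A ^ i).trace) _ _ +
      _ * TannerCycles.nbSum _ _ (fun i => (A ^ i).trace + _) _ _) + _ at hstep
  clear_value E A
  -- only the power sums `z i` of the shifted matrix enter from here on
  obtain ⟨z, hz⟩ : ∃ z : ℕ → ℝ, ∀ i, (A ^ i).trace = z i := ⟨_, fun _ => rfl⟩
  simp only [hz] at hstep hE hz0 hz1
  have h2 := hstep 0
  have h3 := hstep 1
  have h4 := hstep 2
  have h5 := hstep 3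
  have h6 := hstep 4
  have h7 := hstep 5
  norm_num only [hB2, TannerCycles.nbSum] at h2 h3 h4 h5 h6 h7
  clear hstep hedge hN hC hkg hcol hrow
  have e0 := hE 0
  have e1 := hE 1
  have e2 := hE 2
  have e3 := hE 3
  have e4 := hE 4
  have e5 := hE 5
  have e6 := hE 6
  have e7 := hE 7
  have f1 := hE0 (-1) (by norm_num)
  have f2 := hE0 (-2) (by norm_num)
  have f3 := hE0 (-3) (by norm_num)
  have f4 := hE0 (-4) (by norm_num)
  simp only [hz0, hz1, s, Nat.cast_ofNat, Nat.cast_zero, Nat.cast_one]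
    at e0 e1 e2 e3 e4 e5 e6 e7 h2 h3 h4 h5 h6 h7
  -- telescope the recurrence from `tr (B ^ 2) = 0` up to `tr (B ^ (2 * k))`; the rank `μ` cancels
  interval_cases k <;> norm_num only [e0, e1, e2, e3, e4, e5, e6, e7, f1, f2, f3, f4]
  · linear_combination h2 / 2
  · linear_combination (h2 + h3) / 2
  · linear_combination (h2 + h3 + h4) / 2
  · linear_combination (h2 + h3 + h4 + h5) / 2
  · linear_combination (h2 + h3 + h4 + h5 + h6) / 2
  · linear_combination (h2 + h3 + h4 + h5 + h6 + h7) / 2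
end

section
/- Under the Tanner graph setup, if the girth g of G satisfies g ≥ 6, then the number of 8-cycles satisfies N_8 = −3(q1+q2)·N_6 + (T_4 − |E|·A_8)/8, where A_8 = (q1+q2+1)³ + q1·q2·(3q1 + 3q2 + 2); equivalently trace((H Hᵀ)⁴) = 8·N_8 + 24(q1+q2)·N_6 + |E|·A_8. -/
/-!
Write `x = q2`, `y = q1` and `M = H Hᵀ`. Let `V_{2k} i i'` be the number of non-backtracking walks
of length `2k` from check node `i` to check node `i'` in the Tanner graph. Since the graph is
biregular, these matrices are polynomials in `M`: `V₂ = M - (x+1)`,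
`M V₂ = V₄ + (x+y) V₂ + y(x+1)`, and `M V_{2k} = V_{2k+2} + (x+y) V_{2k} + xy V_{2k-2}` for
`k ≥ 2`. The recurrences come from `endCount_nbStep_nbStep` and are assembled in `nb_traces`.
Expanding `M⁴` in the basis `1, V₂, V₄, V₆, V₈` (`trace_pow_four`) gives
`tr M⁴ = tr V₈ + (4x+3y+1) tr V₆ + |E| A₈` once `tr V₂ = tr V₄ = 0`.

Girth at least 6 means that there are no 4-cycles. Let `X₆` and `X₈` be the numbers of closed walks
of length 6 and 8 from a check node that traverse a cycle. A closed non-backtracking walk of length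
2 or 4 does not exist, so `tr V₂ = tr V₄ = 0`; one of length 6 must traverse a 6-cycle, so
`tr V₆ = X₆` (`nb_six`); one of length 8 traverses either an 8-cycle or a 6-cycle together with a
pendant edge leading to the starting check node, and the latter edge can be chosen in `y - 1` ways,
so `tr V₈ = X₈ + (y-1) X₆` (`nb_eight`).
Finally half of the rooted oriented cycles start at a check node, so `8 N₈ = X₈` and `6 N₆ = X₆`
(`cycleCount_eight`, `cycleCount_six`).
-/

open Matrix Finset

/-! ### Non-backtracking walks in a biregular bipartite graph -/

section
variable {β γ : Type*} [Fintype β]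

open Classical in
/-- One non-backtracking step. `h` is the incidence matrix between `β` and `γ`, and `f b c` counts
some walks whose last step goes from `b` to `c`; `nbStep h f c b'` counts their extensions by a step
from `c` to a neighbour `b'` different from the previous vertex `b`. -/
noncomputable def nbStep (h : Matrix β γ ℝ) (f : Matrix β γ ℝ) : Matrix γ β ℝ :=
  fun c b' => ∑ b, if h b' c = 1 ∧ b ≠ b' then f b c else 0

/-- The number of walks ending at `c`, when `f b c` counts those with last step `b → c`. -/
noncomputable def endCount (f : Matrix β γ ℝ) : γ → ℝ := fun c => ∑ b, f b c

/-- `f` vanishes off the edges of the incidence matrix `h`. -/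
def SuppOn (h f : Matrix β γ ℝ) : Prop := ∀ b c, h b c ≠ 1 → f b c = 0

lemma nbStep_suppOn (h f : Matrix β γ ℝ) : SuppOn hᵀ (nbStep h f) := by
  intro c b' hb
  simp only [Matrix.transpose_apply] at hb
  simp [nbStep, hb]

/-- Non-backtracking extensions are all extensions minus those that turn back; an edge `(b', c)`
supports exactly `f b' c` walks that would turn back. -/
lemma nbStep_apply (h f : Matrix β γ ℝ) (h01 : ∀ b c, h b c = 0 ∨ h b c = 1)
    (hf : SuppOn h f) (c : γ) (b' : β) :
    nbStep h f c b' = h b' c * endCount f c - f b' c := by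
  rcases h01 b' c with h0 | h1
  · have : h b' c ≠ 1 := by rw [h0]; norm_num
    simp [nbStep, h0, hf b' c this]
  · simp only [nbStep, endCount, h1, true_and, one_mul]
    classical
    rw [← Finset.sum_erase_add univ (fun b => f b c) (mem_univ b'), add_sub_cancel_right]
    rw [← Finset.sum_filter]
    congr 1
    ext; simp [h1]

/-- The three-term recurrence for non-backtracking walks: extending arbitrarily overcounts by the
walks that return to `c`, and each walk ending at `c` is followed by `d` such returns, `d + 1` being
the degree of `c`. -/
lemma endCount_nbStep_nbStep [Fintype γ] (h f : Matrix β γ ℝ) (h01 : ∀ b c, h b c = 0 ∨ h b c = 1)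
    (hf : SuppOn h f) (d : ℝ) (hd : ∀ c, ∑ b, h b c = d + 1) :
    endCount (nbStep hᵀ (nbStep h f)) = hᵀ *ᵥ endCount (nbStep h f) - d • endCount f := by
  funext c
  have e1 : endCount (nbStep hᵀ (nbStep h f)) c
      = ∑ b, (h b c * endCount (nbStep h f) b - nbStep h f c b) := by
    unfold endCount
    refine Finset.sum_congr rfl fun b _ => ?_
    rw [nbStep_apply hᵀ _ (fun c b => h01 b c) (nbStep_suppOn h f)]
    rfl
  have e2 : ∑ b, nbStep h f c b = d * endCount f c := by
    simp_rw [nbStep_apply h f h01 hf, Finset.sum_sub_distrib, ← Finset.sum_mul, hd]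
    change _ - endCount f c = _
    ring
  rw [e1, Finset.sum_sub_distrib, e2]
  simp [Matrix.mulVec, dotProduct]

end

section
variable {m n : ℕ} (H : Matrix (Fin m) (Fin n) ℝ)

open Classical in
/-- Counts the walks of length one from the check node `i₀` by their only step `i → j`. -/
noncomputable def firstStep (i₀ : Fin m) : Matrix (Fin m) (Fin n) ℝ :=
  fun i j => if i = i₀ ∧ H i j = 1 then 1 else 0

/-- The polynomials `V₂, V₄, V₆, V₈` in `H Hᵀ` count non-backtracking walks of length `2k` between
check nodes, so their traces count the closed ones. In `W2k i`, the walks start at `i`. -/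
lemma nb_traces (x y : ℝ) (h01 : ∀ i j, H i j = 0 ∨ H i j = 1)
    (hc : ∀ j, ∑ i, H i j = y + 1) (hr : ∀ i, ∑ j, H i j = x + 1) :
    let M := H * Hᵀ
    let V2 : Matrix (Fin m) (Fin m) ℝ := M - (x+1) • 1
    let V4 : Matrix (Fin m) (Fin m) ℝ := (M - (x+y) • 1) * V2 - (y*(x+1)) • 1
    let V6 : Matrix (Fin m) (Fin m) ℝ := (M - (x+y) • 1) * V4 - (x*y) • V2
    let V8 : Matrix (Fin m) (Fin m) ℝ := (M - (x+y) • 1) * V6 - (x*y) • V4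
    let W2 := fun i => nbStep H (firstStep H i)
    let W4 := fun i => nbStep H (nbStep Hᵀ (W2 i))
    let W6 := fun i => nbStep H (nbStep Hᵀ (W4 i))
    let W8 := fun i => nbStep H (nbStep Hᵀ (W6 i))
    V2.trace = ∑ i, ∑ j, W2 i j i ∧ V4.trace = ∑ i, ∑ j, W4 i j i ∧
    V6.trace = ∑ i, ∑ j, W6 i j i ∧ V8.trace = ∑ i, ∑ j, W8 i j i := by
  intro M V2 V4 V6 V8 W2 W4 W6 W8
  have key : ∀ i₀, endCount (W2 i₀) = V2 *ᵥ Pi.single i₀ 1 ∧ endCount (W4 i₀) = V4 *ᵥ Pi.single i₀ 1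
     ∧ endCount (W6 i₀) = V6 *ᵥ Pi.single i₀ 1 ∧ endCount (W8 i₀) = V8 *ᵥ Pi.single i₀ 1 := by
    intro i₀
    set e : Fin m → ℝ := Pi.single i₀ 1 with he
    have hT01 : ∀ j i, Hᵀ j i = 0 ∨ Hᵀ j i = 1 := fun j i => h01 i j
    have s1 : SuppOn H (firstStep H i₀) := by
      intro b c hb; simp [firstStep, hb]
    have f1 : ∀ i j, firstStep H i₀ i j = e i * H i j := by
      intro i j
      simp only [firstStep, he, Pi.single_apply]
      rcases h01 i j with h | h <;> by_cases h' : i = i₀ <;> simp [h, h']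
      all_goals (subst h'; simp [h])
    have v1 : endCount (firstStep H i₀) = Hᵀ *ᵥ e := by
      funext j
      simp [endCount, f1, Matrix.mulVec, dotProduct, mul_comm]
    have v2 : endCount (W2 i₀) = V2 *ᵥ e := by
      funext i
      have : endCount (W2 i₀) i = ∑ j, (H i j * (Hᵀ *ᵥ e) j - e i * H i j) := by
        unfold endCount
        refine Finset.sum_congr rfl fun j _ => ?_
        simp only [W2]
        rw [nbStep_apply H _ h01 s1, v1, f1]
      rw [this, Finset.sum_sub_distrib, ← Finset.mul_sum, hr]
      simp only [V2, M, Matrix.sub_mulVec, ← Matrix.mulVec_mulVec, Matrix.smul_mulVec,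
        Matrix.one_mulVec, Pi.sub_apply, Pi.smul_apply, smul_eq_mul, mul_comm]
      rfl
    have odd : ∀ f : Matrix (Fin m) (Fin n) ℝ, SuppOn H f →
        endCount (nbStep Hᵀ (nbStep H f)) = Hᵀ *ᵥ endCount (nbStep H f) - y • endCount f :=
      fun f hf => endCount_nbStep_nbStep H f h01 hf y hc
    have even : ∀ f : Matrix (Fin n) (Fin m) ℝ, SuppOn Hᵀ f →
        endCount (nbStep H (nbStep Hᵀ f)) = H *ᵥ endCount (nbStep Hᵀ f) - x • endCount f :=
      fun f hf => endCount_nbStep_nbStep Hᵀ f hT01 hf x hr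
    have v3 := odd _ s1
    have v4 := even _ (nbStep_suppOn H (firstStep H i₀))
    have v5 := odd _ (nbStep_suppOn Hᵀ (W2 i₀))
    have v6 := even _ (nbStep_suppOn H (nbStep Hᵀ (W2 i₀)))
    have v7 := odd _ (nbStep_suppOn Hᵀ (W4 i₀))
    have v8 := even _ (nbStep_suppOn H (nbStep Hᵀ (W4 i₀)))
    change endCount (nbStep Hᵀ (W2 i₀)) = _ *ᵥ endCount (W2 i₀) - _ at v3
    change endCount (W4 i₀) = _ - x • endCount (W2 i₀) at v4
    change endCount (nbStep Hᵀ (W4 i₀)) = _ *ᵥ endCount (W4 i₀) - _ at v5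
    change endCount (W6 i₀) = _ - x • endCount (W4 i₀) at v6
    change endCount (nbStep Hᵀ (W6 i₀)) = _ *ᵥ endCount (W6 i₀) - _ at v7
    change endCount (W8 i₀) = _ - x • endCount (W6 i₀) at v8
    have r : ∀ w : Fin m → ℝ, H *ᵥ (Hᵀ *ᵥ w) = M *ᵥ w := fun w => Matrix.mulVec_mulVec _ _ _
    have g4 : endCount (W4 i₀) = V4 *ᵥ e := by
      rw [v4, v3, v1, Matrix.mulVec_sub, Matrix.mulVec_smul, r, r, v2]
      simp only [V4, V2, Matrix.sub_mulVec, ← Matrix.mulVec_mulVec, Matrix.smul_mulVec,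
        Matrix.one_mulVec]
      module
    have h3 : H *ᵥ endCount (nbStep Hᵀ (W2 i₀)) = V4 *ᵥ e + x • V2 *ᵥ e := by
      rw [← g4, ← v2, v4, sub_add_cancel]
    have g6 : endCount (W6 i₀) = V6 *ᵥ e := by
      rw [v6, v5, Matrix.mulVec_sub, Matrix.mulVec_smul, r, h3, g4]
      simp only [V6, Matrix.sub_mulVec, ← Matrix.mulVec_mulVec, Matrix.smul_mulVec,
        Matrix.one_mulVec]
      module
    have h5 : H *ᵥ endCount (nbStep Hᵀ (W4 i₀)) = V6 *ᵥ e + x • V4 *ᵥ e := by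
      rw [← g6, ← g4, v6, sub_add_cancel]
    refine ⟨v2, g4, g6, ?_⟩
    rw [v8, v7, Matrix.mulVec_sub, Matrix.mulVec_smul, r, h5, g6]
    simp only [V8, Matrix.sub_mulVec, ← Matrix.mulVec_mulVec, Matrix.smul_mulVec,
        Matrix.one_mulVec]
    module
  have fin : ∀ (V : Matrix (Fin m) (Fin m) ℝ) (W : Fin m → Matrix (Fin n) (Fin m) ℝ),
      (∀ i, endCount (W i) = V *ᵥ Pi.single i 1) → V.trace = ∑ i, ∑ j, W i j i := by
    intro V W hW
    refine Finset.sum_congr rfl fun i _ => ?_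
    have := congrFun (hW i) i
    rw [Matrix.mulVec_single_one] at this
    exact this.symm
  exact ⟨fin _ _ fun i => (key i).1, fin _ _ fun i => (key i).2.1,
    fin _ _ fun i => (key i).2.2.1, fin _ _ fun i => (key i).2.2.2⟩

/-- Expansion of `M⁴` in the non-backtracking polynomials `1, V₂, V₄, V₆, V₈`. -/
lemma trace_pow_four (x y : ℝ) (M : Matrix (Fin m) (Fin m) ℝ) :
    let V2 : Matrix (Fin m) (Fin m) ℝ := M - (x+1) • 1
    let V4 : Matrix (Fin m) (Fin m) ℝ := (M - (x+y) • 1) * V2 - (y*(x+1)) • 1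
    let V6 : Matrix (Fin m) (Fin m) ℝ := (M - (x+y) • 1) * V4 - (x*y) • V2
    let V8 : Matrix (Fin m) (Fin m) ℝ := (M - (x+y) • 1) * V6 - (x*y) • V4
    V2.trace = 0 → V4.trace = 0 →
    (M ^ 4).trace = V8.trace + (4 * x + 3 * y + 1) * V6.trace
      + m * (x + 1) * ((y + x + 1)^3 + y * x * (3 * y + 3 * x + 2)) := by
  intro V2 V4 V6 V8 h2 h4
  have e : M = V2 + (x+1) • 1 := by simp [V2]
  have e2 : M * V2 = V4 + (x+y) • V2 + (y*(x+1)) • 1 := by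
    simp only [V4, sub_mul, smul_mul_assoc, one_mul]; module
  have e4 : M * V4 = V6 + (x+y) • V4 + (x*y) • V2 := by
    simp only [V6, sub_mul, smul_mul_assoc, one_mul]; module
  have e6 : M * V6 = V8 + (x+y) • V6 + (x*y) • V4 := by
    simp only [V8, sub_mul, smul_mul_assoc, one_mul]; module
  have p2 : M * M = V4 + (x+y+x+1) • V2 + (y*(x+1)+(x+1)*(x+1)) • 1 := by
    conv_lhs => rhs; rw [e]
    rw [mul_add, e2, mul_smul_comm, mul_one]
    conv_lhs => rhs; rw [e]
    module
  set c : ℝ := x * y + (2 * x + y + 1) * (x + y) + y * (x + 1) + (x + 1) * (x + 1) with hc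
  set c' : ℝ := (2 * x + y + 1) * (y * (x + 1)) + (y * (x + 1) + (x + 1) * (x + 1)) * (x + 1)
    with hc'
  have p3 : M * (M * M) = V6 + (3 * x + 2 * y + 1) • V4 + c • V2 + c' • 1 := by
    rw [p2]
    simp only [mul_add, mul_smul_comm, e2, e4, mul_one]
    conv_lhs => rhs; rw [e]
    rw [hc, hc']
    module
  have p4 : M ^ 4 = V8 + (4 * x + 3 * y + 1) • V6
      + (x * y + (3 * x + 2 * y + 1) * (x + y) + c) • V4
      + ((3 * x + 2 * y + 1) * (x * y) + c * (x + y) + c') • V2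
      + (c * (y * (x + 1)) + c' * (x + 1)) • 1 := by
    have : M ^ 4 = M * (M * (M * M)) := by noncomm_ring
    rw [this, p3]
    simp only [mul_add, mul_smul_comm, e2, e4, e6, mul_one]
    conv_lhs => rhs; rw [e]
    module
  rw [p4]
  simp [h2, h4, hc, hc']
  ring

end

/-! ### Cycles of length 6 and 8 as tuples -/

section
variable {m n : ℕ} (H : Matrix (Fin m) (Fin n) ℝ)

/-- The closed walk `i₁ j₁ i₂ j₂ i₃ j₃ i₁` exists in the Tanner graph and traverses a 6-cycle. -/
def IsHex (t : Fin m × Fin n × Fin m × Fin n × Fin m × Fin n) : Prop :=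
  let ⟨i₁, j₁, i₂, j₂, i₃, j₃⟩ := t
  (H i₁ j₁ = 1 ∧ H i₂ j₁ = 1 ∧ H i₂ j₂ = 1 ∧ H i₃ j₂ = 1 ∧ H i₃ j₃ = 1 ∧ H i₁ j₃ = 1) ∧
  (i₁ ≠ i₂ ∧ i₂ ≠ i₃ ∧ i₃ ≠ i₁) ∧ (j₁ ≠ j₂ ∧ j₂ ≠ j₃ ∧ j₃ ≠ j₁)

/-- The closed walk `i₁ j₁ i₂ j₂ i₃ j₃ i₄ j₄ i₁` exists in the Tanner graph and is cyclically
non-backtracking. Opposite vertices are not required to differ; in the absence of 4-cycles they do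
(`IsOct.opposite_ne`), so that the walk traverses an 8-cycle. -/
def IsOct (t : Fin m × Fin n × Fin m × Fin n × Fin m × Fin n × Fin m × Fin n) : Prop :=
  let ⟨i₁, j₁, i₂, j₂, i₃, j₃, i₄, j₄⟩ := t
  (H i₁ j₁ = 1 ∧ H i₂ j₁ = 1 ∧ H i₂ j₂ = 1 ∧ H i₃ j₂ = 1 ∧
    H i₃ j₃ = 1 ∧ H i₄ j₃ = 1 ∧ H i₄ j₄ = 1 ∧ H i₁ j₄ = 1) ∧
  (i₁ ≠ i₂ ∧ i₂ ≠ i₃ ∧ i₃ ≠ i₄ ∧ i₄ ≠ i₁) ∧ (j₁ ≠ j₂ ∧ j₂ ≠ j₃ ∧ j₃ ≠ j₄ ∧ j₄ ≠ j₁)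

lemma tanner_inl_inr (i : Fin m) (j : Fin n) :
    (tannerGraph H).Adj (Sum.inl i) (Sum.inr j) ↔ H i j = 1 := by
  simp [tannerGraph]

lemma tanner_inr_inl (i : Fin m) (j : Fin n) :
    (tannerGraph H).Adj (Sum.inr j) (Sum.inl i) ↔ H i j = 1 := by
  simp [tannerGraph]

lemma tanner_inl_inl (i i' : Fin m) : ¬ (tannerGraph H).Adj (Sum.inl i) (Sum.inl i') := by
  simp [tannerGraph]

lemma tanner_inr_inr (j j' : Fin n) : ¬ (tannerGraph H).Adj (Sum.inr j) (Sum.inr j') := by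
  simp [tannerGraph]

lemma no_four_cycle (hg : (6 : ℕ∞) ≤ (tannerGraph H).egirth) (i i' : Fin m) (j j' : Fin n)
    (h1 : H i j = 1) (h2 : H i' j = 1) (h3 : H i' j' = 1) (h4 : H i j' = 1) :
    i = i' ∨ j = j' := by
  by_contra! hne
  obtain ⟨hi, hj⟩ := hne
  let w : (tannerGraph H).Walk (Sum.inl i) (Sum.inl i) :=
    .cons ((tanner_inl_inr H i j).2 h1) (.cons ((tanner_inr_inl H i' j).2 h2)
      (.cons ((tanner_inl_inr H i' j').2 h3) (.cons ((tanner_inr_inl H i j').2 h4) .nil)))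
  have hw : w.IsCycle := by
    simp only [w]
    rw [SimpleGraph.Walk.cons_isCycle_iff, SimpleGraph.Walk.isPath_def]
    simp [hi, hj, hi.symm]
  have := hg.trans hw.egirth_le_length
  simp only [w, SimpleGraph.Walk.length_cons, SimpleGraph.Walk.length_nil] at this
  norm_cast at this

lemma walk_from_check {i : Fin m} {v : Fin m ⊕ Fin n} (w : (tannerGraph H).Walk (Sum.inl i) v)
    {k : ℕ} (hl : w.length = k + 1) :
    ∃ (j : Fin n) (h : H i j = 1) (w' : (tannerGraph H).Walk (Sum.inr j) v),
      w'.length = k ∧ w = .cons ((tanner_inl_inr H i j).2 h) w' := by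
  cases w with
  | nil => simp at hl
  | @cons _ u _ a w' =>
    rcases u with i' | j
    · exact (tanner_inl_inl H i i' a).elim
    · exact ⟨j, (tanner_inl_inr H i j).1 a, w', by simpa using hl, rfl⟩

lemma walk_from_variable {j : Fin n} {v : Fin m ⊕ Fin n}
    (w : (tannerGraph H).Walk (Sum.inr j) v) {k : ℕ} (hl : w.length = k + 1) :
    ∃ (i : Fin m) (h : H i j = 1) (w' : (tannerGraph H).Walk (Sum.inl i) v),
      w'.length = k ∧ w = .cons ((tanner_inr_inl H i j).2 h) w' := by
  cases w with
  | nil => simp at hl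
  | @cons _ u _ a w' =>
    rcases u with i | j'
    · exact ⟨i, (tanner_inr_inl H i j).1 a, w', by simpa using hl, rfl⟩
    · exact (tanner_inr_inr H j j' a).elim

/-- Each tuple gives two rooted oriented 6-cycles, started at `i₁` and at `j₁` respectively, and
every rooted oriented 6-cycle arises exactly once. -/
lemma cycleCount_six :
    cycleCount (tannerGraph H) 6 = 2 * Nat.card {t // IsHex H t} := by
  let wl : {t // IsHex H t} → {p : Σ v, (tannerGraph H).Walk v v // p.2.length = 6 ∧ p.2.IsCycle} :=
    fun ⟨⟨i₁, j₁, i₂, j₂, i₃, j₃⟩, h⟩ => ⟨⟨Sum.inl i₁,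
      .cons ((tanner_inl_inr H i₁ j₁).2 h.1.1) (.cons ((tanner_inr_inl H i₂ j₁).2 h.1.2.1)
      (.cons ((tanner_inl_inr H i₂ j₂).2 h.1.2.2.1) (.cons ((tanner_inr_inl H i₃ j₂).2 h.1.2.2.2.1)
      (.cons ((tanner_inl_inr H i₃ j₃).2 h.1.2.2.2.2.1)
      (.cons ((tanner_inr_inl H i₁ j₃).2 h.1.2.2.2.2.2) .nil)))))⟩, by
      obtain ⟨-, h1, h2⟩ := h
      refine ⟨rfl, ?_⟩
      rw [SimpleGraph.Walk.cons_isCycle_iff, SimpleGraph.Walk.isPath_def]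
      simp [h1, h2, h1.1.symm, h2.2.2.symm]⟩
  let wr : {t // IsHex H t} → {p : Σ v, (tannerGraph H).Walk v v // p.2.length = 6 ∧ p.2.IsCycle} :=
    fun ⟨⟨i₁, j₁, i₂, j₂, i₃, j₃⟩, h⟩ => ⟨⟨Sum.inr j₁,
      .cons ((tanner_inr_inl H i₂ j₁).2 h.1.2.1)
      (.cons ((tanner_inl_inr H i₂ j₂).2 h.1.2.2.1) (.cons ((tanner_inr_inl H i₃ j₂).2 h.1.2.2.2.1)
      (.cons ((tanner_inl_inr H i₃ j₃).2 h.1.2.2.2.2.1)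
      (.cons ((tanner_inr_inl H i₁ j₃).2 h.1.2.2.2.2.2)
      (.cons ((tanner_inl_inr H i₁ j₁).2 h.1.1) .nil)))))⟩, by
      obtain ⟨-, h1, h2⟩ := h
      refine ⟨rfl, ?_⟩
      rw [SimpleGraph.Walk.cons_isCycle_iff, SimpleGraph.Walk.isPath_def]
      simp [h1, h2, h1.1.symm, h2.2.2.symm, h2.1.symm]⟩
  have hb : Function.Bijective (Sum.elim wl wr) := by
    constructor
    · rintro (⟨⟨i₁, j₁, i₂, j₂, i₃, j₃⟩, h⟩ | ⟨⟨i₁, j₁, i₂, j₂, i₃, j₃⟩, h⟩)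
        (⟨⟨i₁', j₁', i₂', j₂', i₃', j₃'⟩, h'⟩ | ⟨⟨i₁', j₁', i₂', j₂', i₃', j₃'⟩, h'⟩) heq
      all_goals
        have := congrArg (fun p => p.1.2.support) heq
        simp [wl, wr] at this
        try simp [this]
    · rintro ⟨⟨i₁ | j₁, w⟩, hl, hc⟩
      · obtain ⟨j₁, a₁, w, l1, rfl⟩ := walk_from_check H w hl
        obtain ⟨i₂, a₂, w, l2, rfl⟩ := walk_from_variable H w l1
        obtain ⟨j₂, a₃, w, l3, rfl⟩ := walk_from_check H w l2
        obtain ⟨i₃, a₄, w, l4, rfl⟩ := walk_from_variable H w l3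
        obtain ⟨j₃, a₅, w, l5, rfl⟩ := walk_from_check H w l4
        obtain ⟨i₁', a₆, w, l6, rfl⟩ := walk_from_variable H w l5
        cases w with
        | cons _ _ => simp at l6
        | nil =>
        refine ⟨Sum.inl ⟨⟨i₁, j₁, i₂, j₂, i₃, j₃⟩, ⟨a₁, a₂, a₃, a₄, a₅, a₆⟩, ?_⟩, rfl⟩
        have := hc.support_nodup
        simp at this
        grind
      · obtain ⟨i₂, a₂, w, l1, rfl⟩ := walk_from_variable H w hl
        obtain ⟨j₂, a₃, w, l2, rfl⟩ := walk_from_check H w l1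
        obtain ⟨i₃, a₄, w, l3, rfl⟩ := walk_from_variable H w l2
        obtain ⟨j₃, a₅, w, l4, rfl⟩ := walk_from_check H w l3
        obtain ⟨i₁, a₆, w, l5, rfl⟩ := walk_from_variable H w l4
        obtain ⟨j₁', a₁, w, l6, rfl⟩ := walk_from_check H w l5
        cases w with
        | cons _ _ => simp at l6
        | nil =>
        refine ⟨Sum.inr ⟨⟨i₁, j₁, i₂, j₂, i₃, j₃⟩, ⟨a₁, a₂, a₃, a₄, a₅, a₆⟩, ?_⟩, rfl⟩
        have := hc.support_nodup
        simp at this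
        grind
  have := Nat.card_congr (Equiv.ofBijective _ hb)
  rw [Nat.card_sum] at this
  unfold cycleCount
  omega

lemma IsOct.opposite_ne (h4 : ∀ i i' j j', H i j = 1 → H i' j = 1 → H i' j' = 1 → H i j' = 1 →
      i = i' ∨ j = j') {i₁ i₂ i₃ i₄ : Fin m} {j₁ j₂ j₃ j₄ : Fin n}
    (h : IsOct H (i₁, j₁, i₂, j₂, i₃, j₃, i₄, j₄)) :
    i₁ ≠ i₃ ∧ i₂ ≠ i₄ ∧ j₁ ≠ j₃ ∧ j₂ ≠ j₄ := by
  obtain ⟨⟨a₁, a₂, a₃, a₄, a₅, a₆, a₇, a₈⟩, hi, hj⟩ := h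
  refine ⟨?_, ?_, ?_, ?_⟩ <;> rintro rfl
  · exact (h4 _ _ _ _ a₁ a₂ a₃ a₄).elim hi.1 hj.1
  · exact (h4 _ _ _ _ a₃ a₄ a₅ a₆).elim hi.2.1 hj.2.1
  · exact (h4 _ _ _ _ a₂ a₅ a₄ a₃).elim hi.2.1 hj.1
  · exact (h4 _ _ _ _ a₄ a₇ a₆ a₅).elim hi.2.2.1 hj.2.1

/-- Each tuple gives two rooted oriented 8-cycles, started at `i₁` and at `j₁` respectively, and
every rooted oriented 8-cycle arises exactly once. -/
lemma cycleCount_eight (h4 : ∀ i i' j j', H i j = 1 → H i' j = 1 → H i' j' = 1 → H i j' = 1 →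
      i = i' ∨ j = j') :
    cycleCount (tannerGraph H) 8 = 2 * Nat.card {t // IsOct H t} := by
  let wl : {t // IsOct H t} → {p : Σ v, (tannerGraph H).Walk v v // p.2.length = 8 ∧ p.2.IsCycle} :=
    fun ⟨⟨i₁, j₁, i₂, j₂, i₃, j₃, i₄, j₄⟩, h⟩ => ⟨⟨Sum.inl i₁,
      .cons ((tanner_inl_inr H i₁ j₁).2 h.1.1) (.cons ((tanner_inr_inl H i₂ j₁).2 h.1.2.1)
      (.cons ((tanner_inl_inr H i₂ j₂).2 h.1.2.2.1) (.cons ((tanner_inr_inl H i₃ j₂).2 h.1.2.2.2.1)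
      (.cons ((tanner_inl_inr H i₃ j₃).2 h.1.2.2.2.2.1)
      (.cons ((tanner_inr_inl H i₄ j₃).2 h.1.2.2.2.2.2.1)
      (.cons ((tanner_inl_inr H i₄ j₄).2 h.1.2.2.2.2.2.2.1)
      (.cons ((tanner_inr_inl H i₁ j₄).2 h.1.2.2.2.2.2.2.2) .nil)))))))⟩, by
      have hd := IsOct.opposite_ne H h4 h
      obtain ⟨-, h1, h2⟩ := h
      refine ⟨rfl, ?_⟩
      rw [SimpleGraph.Walk.cons_isCycle_iff, SimpleGraph.Walk.isPath_def]
      simp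
      grind⟩
  let wr : {t // IsOct H t} → {p : Σ v, (tannerGraph H).Walk v v // p.2.length = 8 ∧ p.2.IsCycle} :=
    fun ⟨⟨i₁, j₁, i₂, j₂, i₃, j₃, i₄, j₄⟩, h⟩ => ⟨⟨Sum.inr j₁,
      .cons ((tanner_inr_inl H i₂ j₁).2 h.1.2.1)
      (.cons ((tanner_inl_inr H i₂ j₂).2 h.1.2.2.1) (.cons ((tanner_inr_inl H i₃ j₂).2 h.1.2.2.2.1)
      (.cons ((tanner_inl_inr H i₃ j₃).2 h.1.2.2.2.2.1)
      (.cons ((tanner_inr_inl H i₄ j₃).2 h.1.2.2.2.2.2.1)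
      (.cons ((tanner_inl_inr H i₄ j₄).2 h.1.2.2.2.2.2.2.1)
      (.cons ((tanner_inr_inl H i₁ j₄).2 h.1.2.2.2.2.2.2.2)
      (.cons ((tanner_inl_inr H i₁ j₁).2 h.1.1) .nil)))))))⟩, by
      have hd := IsOct.opposite_ne H h4 h
      obtain ⟨-, h1, h2⟩ := h
      refine ⟨rfl, ?_⟩
      rw [SimpleGraph.Walk.cons_isCycle_iff, SimpleGraph.Walk.isPath_def]
      simp
      grind⟩
  have hb : Function.Bijective (Sum.elim wl wr) := by
    constructor
    · rintro (⟨⟨i₁, j₁, i₂, j₂, i₃, j₃, i₄, j₄⟩, h⟩ | ⟨⟨i₁, j₁, i₂, j₂, i₃, j₃, i₄, j₄⟩, h⟩)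
        (⟨⟨i₁', j₁', i₂', j₂', i₃', j₃', i₄', j₄'⟩, h'⟩ | ⟨⟨i₁', j₁', i₂', j₂', i₃', j₃', i₄', j₄'⟩, h'⟩) heq
      all_goals
        have := congrArg (fun p => p.1.2.support) heq
        simp [wl, wr] at this
        try simp [this]
    · rintro ⟨⟨i₁ | j₁, w⟩, hl, hc⟩
      · obtain ⟨j₁, a₁, w, l1, rfl⟩ := walk_from_check H w hl
        obtain ⟨i₂, a₂, w, l2, rfl⟩ := walk_from_variable H w l1
        obtain ⟨j₂, a₃, w, l3, rfl⟩ := walk_from_check H w l2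
        obtain ⟨i₃, a₄, w, l4, rfl⟩ := walk_from_variable H w l3
        obtain ⟨j₃, a₅, w, l5, rfl⟩ := walk_from_check H w l4
        obtain ⟨i₄, a₆, w, l6, rfl⟩ := walk_from_variable H w l5
        obtain ⟨j₄, a₇, w, l7, rfl⟩ := walk_from_check H w l6
        obtain ⟨i₁', a₈, w, l8, rfl⟩ := walk_from_variable H w l7
        cases w with
        | cons _ _ => simp at l8
        | nil =>
        refine ⟨Sum.inl ⟨⟨i₁, j₁, i₂, j₂, i₃, j₃, i₄, j₄⟩, ⟨a₁, a₂, a₃, a₄, a₅, a₆, a₇, a₈⟩, ?_⟩, rfl⟩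
        have := hc.support_nodup
        simp at this
        grind
      · obtain ⟨i₂, a₂, w, l1, rfl⟩ := walk_from_variable H w hl
        obtain ⟨j₂, a₃, w, l2, rfl⟩ := walk_from_check H w l1
        obtain ⟨i₃, a₄, w, l3, rfl⟩ := walk_from_variable H w l2
        obtain ⟨j₃, a₅, w, l4, rfl⟩ := walk_from_check H w l3
        obtain ⟨i₄, a₆, w, l5, rfl⟩ := walk_from_variable H w l4
        obtain ⟨j₄, a₇, w, l6, rfl⟩ := walk_from_check H w l5
        obtain ⟨i₁, a₈, w, l7, rfl⟩ := walk_from_variable H w l6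
        obtain ⟨j₁', a₁, w, l8, rfl⟩ := walk_from_check H w l7
        cases w with
        | cons _ _ => simp at l8
        | nil =>
        refine ⟨Sum.inr ⟨⟨i₁, j₁, i₂, j₂, i₃, j₃, i₄, j₄⟩, ⟨a₁, a₂, a₃, a₄, a₅, a₆, a₇, a₈⟩, ?_⟩, rfl⟩
        have := hc.support_nodup
        simp at this
        grind
  have := Nat.card_congr (Equiv.ofBijective _ hb)
  rw [Nat.card_sum] at this
  unfold cycleCount
  omega

end

/-! ### Closed non-backtracking walks in a Tanner graph without 4-cycles -/

section
variable {m n : ℕ} (H : Matrix (Fin m) (Fin n) ℝ)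

open Classical in
lemma nbStep_firstStep (i₀ i : Fin m) (j : Fin n) :
    nbStep H (firstStep H i₀) j i = if H i j = 1 ∧ i₀ ≠ i ∧ H i₀ j = 1 then 1 else 0 := by
  unfold nbStep firstStep
  rw [Finset.sum_eq_single i₀]
  · split_ifs <;> simp_all
  · intro b _ hb; simp [hb]
  · simp

lemma nb_two : ∑ i, ∑ j, nbStep H (firstStep H i) j i = 0 := by
  simp [nbStep_firstStep]

lemma nb_four (h4 : ∀ i i' j j', H i j = 1 → H i' j = 1 → H i' j' = 1 → H i j' = 1 →
      i = i' ∨ j = j') :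
    ∑ i, ∑ j, nbStep H (nbStep Hᵀ (nbStep H (firstStep H i))) j i = 0 := by
  classical
  refine Finset.sum_eq_zero fun i₁ _ => Finset.sum_eq_zero fun j₁ _ => ?_
  simp only [nbStep_firstStep, nbStep.eq_1 _ (nbStep _ _), Finset.ite_sum_zero, ← ite_and,
    Matrix.transpose_apply]
  refine Finset.sum_eq_zero fun i₂ _ => Finset.sum_eq_zero fun j₂ _ => if_neg ?_
  rintro ⟨a, b, c⟩
  exact (h4 _ _ _ _ a.1 b.1 c.1 c.2.2).elim c.2.1 b.2.symm

lemma card_eq_sum {α : Type*} [Fintype α] (p : α → Prop) [DecidablePred p] :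
    (Nat.card {t // p t} : ℝ) = ∑ t, if p t then 1 else 0 := by
  rw [Nat.card_eq_fintype_card, Fintype.card_subtype, Finset.sum_boole]

lemma nb_six (h4 : ∀ i i' j j', H i j = 1 → H i' j = 1 → H i' j' = 1 → H i j' = 1 →
      i = i' ∨ j = j') :
    ∑ i, ∑ j, nbStep H (nbStep Hᵀ (nbStep H (nbStep Hᵀ (nbStep H (firstStep H i))))) j i
      = Nat.card {t // IsHex H t} := by
  classical
  rw [card_eq_sum]
  simp only [Fintype.sum_prod_type]
  refine Finset.sum_congr rfl fun i₁ _ => Finset.sum_congr rfl fun j₁ _ => ?_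
  simp only [nbStep_firstStep, nbStep.eq_1 _ (nbStep _ _), Finset.ite_sum_zero, ← ite_and, Matrix.transpose_apply]
  refine Finset.sum_congr rfl fun i₂ _ => Finset.sum_congr rfl fun j₂ _ =>
    Finset.sum_congr rfl fun i₃ _ => Finset.sum_congr rfl fun j₃ _ => ?_
  refine if_congr ?_ rfl rfl
  unfold IsHex
  constructor
  · rintro ⟨a, b, c, d, e⟩
    refine ⟨⟨a.1, b.1, c.1, d.1, e.1, e.2.2⟩, ⟨a.2.symm, c.2.symm, e.2.1.symm⟩,
      b.2.symm, d.2.symm, ?_⟩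
    -- `j₃ = j₁` would leave the 4-cycle `i₂ j₁ i₃ j₂`
    rintro rfl
    exact (h4 _ _ _ _ b.1 e.1 d.1 c.1).elim c.2.symm b.2.symm
  · rintro ⟨⟨a₁, a₂, a₃, a₄, a₅, a₆⟩, hi, hj⟩
    exact ⟨⟨a₁, hi.1.symm⟩, ⟨a₂, hj.1.symm⟩, ⟨a₃, hi.2.1.symm⟩, ⟨a₄, hj.2.1.symm⟩,
      a₅, hi.2.2.symm, a₆⟩

open Classical in
/-- A variable node has `y - 1` neighbours besides two given ones. -/
lemma sum_pendant (y : ℝ) (h01 : ∀ i j, H i j = 0 ∨ H i j = 1) (hc : ∀ j, ∑ i, H i j = y + 1)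
    {i i' : Fin m} {j : Fin n} (hi : H i j = 1) (hi' : H i' j = 1) (hne : i ≠ i') :
    ∑ k, (if H k j = 1 ∧ k ≠ i ∧ k ≠ i' then (1 : ℝ) else 0) = y - 1 := by
  have e : ∀ k, (if H k j = 1 ∧ k ≠ i ∧ k ≠ i' then (1 : ℝ) else 0)
      = H k j - (if k = i then 1 else 0) - (if k = i' then 1 else 0) := by
    intro k
    by_cases h : k = i
    · subst h; simp [hi, hne]
    by_cases h' : k = i'
    · subst h'; simp [hi', h]
    rcases h01 k j with h0 | h0 <;> simp [h, h', h0]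
  simp only [e, Finset.sum_sub_distrib, hc, Finset.sum_ite_eq', Finset.mem_univ, if_true]
  ring

/-- Closed non-backtracking walks `i₁ j₁ i₂ j₂ i₃ j₃ i₄ j₄ i₁` with `j₄ ≠ j₁` are the 8-cycles; those
with `j₄ = j₁` consist of the 6-cycle `i₄ j₁ i₂ j₂ i₃ j₃` and the pendant edge `i₁ j₁`. -/
lemma nb_eight (y : ℝ) (h01 : ∀ i j, H i j = 0 ∨ H i j = 1) (hc : ∀ j, ∑ i, H i j = y + 1)
    (h4 : ∀ i i' j j', H i j = 1 → H i' j = 1 → H i' j' = 1 → H i j' = 1 →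
      i = i' ∨ j = j') :
    ∑ i, ∑ j, nbStep H (nbStep Hᵀ (nbStep H (nbStep Hᵀ (nbStep H (nbStep Hᵀ
        (nbStep H (firstStep H i))))))) j i
      = Nat.card {t // IsOct H t} + (y - 1) * Nat.card {t // IsHex H t} := by
  classical
  have tail : ∑ i₁, ∑ j₁, ∑ i₂, ∑ j₂, ∑ i₃, ∑ j₃, ∑ i₄,
      (if IsHex H (i₄, j₁, i₂, j₂, i₃, j₃) ∧ H i₁ j₁ = 1 ∧ i₁ ≠ i₂ ∧ i₁ ≠ i₄ then (1 : ℝ) else 0)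
      = (y - 1) * Nat.card {t // IsHex H t} := by
    have e : ∀ i₁ : Fin m, ∑ j₁, ∑ i₂, ∑ j₂, ∑ i₃, ∑ j₃, ∑ i₄,
        (if IsHex H (i₄, j₁, i₂, j₂, i₃, j₃) ∧ H i₁ j₁ = 1 ∧ i₁ ≠ i₂ ∧ i₁ ≠ i₄ then (1 : ℝ) else 0)
        = ∑ t : Fin n × Fin m × Fin n × Fin m × Fin n × Fin m,
          (if IsHex H (t.2.2.2.2.2, t.1, t.2.1, t.2.2.1, t.2.2.2.1, t.2.2.2.2.1) ∧
            H i₁ t.1 = 1 ∧ i₁ ≠ t.2.1 ∧ i₁ ≠ t.2.2.2.2.2 then (1 : ℝ) else 0) := by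
      intro i₁
      simp only [Fintype.sum_prod_type]
    simp only [e]
    rw [Finset.sum_comm, card_eq_sum, Finset.mul_sum]
    let rot : Fin n × Fin m × Fin n × Fin m × Fin n × Fin m ≃
        Fin m × Fin n × Fin m × Fin n × Fin m × Fin n :=
      { toFun := fun t => (t.2.2.2.2.2, t.1, t.2.1, t.2.2.1, t.2.2.2.1, t.2.2.2.2.1)
        invFun := fun t => (t.2.1, t.2.2.1, t.2.2.2.1, t.2.2.2.2.1, t.2.2.2.2.2, t.1)
        left_inv := fun _ => rfl
        right_inv := fun _ => rfl }
    refine Fintype.sum_equiv rot _ _ ?_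
    rintro ⟨j₁, i₂, j₂, i₃, j₃, i₄⟩
    simp only [rot, Equiv.coe_fn_mk]
    by_cases h : IsHex H (i₄, j₁, i₂, j₂, i₃, j₃)
    · simp only [h, true_and, if_true, mul_one]
      exact sum_pendant H y h01 hc h.1.2.1 h.1.1 h.2.1.1.symm
    · simp [h]
  rw [← tail, card_eq_sum]
  simp only [Fintype.sum_prod_type, ← Finset.sum_add_distrib]
  refine Finset.sum_congr rfl fun i₁ _ => Finset.sum_congr rfl fun j₁ _ => ?_
  simp only [nbStep_firstStep, nbStep.eq_1 _ (nbStep _ _),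
    Finset.ite_sum_zero, ← ite_and, Matrix.transpose_apply]
  refine Finset.sum_congr rfl fun i₂ _ => Finset.sum_congr rfl fun j₂ _ =>
    Finset.sum_congr rfl fun i₃ _ => Finset.sum_congr rfl fun j₃ _ =>
    Finset.sum_congr rfl fun i₄ _ => ?_
  set Q := IsHex H (i₄, j₁, i₂, j₂, i₃, j₃) ∧ H i₁ j₁ = 1 ∧ i₁ ≠ i₂ ∧ i₁ ≠ i₄ with hQ
  have eQ : (if Q then (1 : ℝ) else 0) = ∑ j₄, if j₄ = j₁ then (if Q then (1 : ℝ) else 0) else 0 := by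
    simp
  rw [eQ, ← Finset.sum_add_distrib]
  refine Finset.sum_congr rfl fun j₄ _ => ?_
  by_cases hj : j₄ = j₁
  · subst hj
    have ho : ¬ IsOct H (i₁, j₄, i₂, j₂, i₃, j₃, i₄, j₄) := fun h => h.2.2.2.2.2 rfl
    rw [if_neg ho, if_pos rfl, zero_add]
    refine if_congr ?_ rfl rfl
    rw [hQ]
    constructor
    · rintro ⟨a, b, c, d, e, f, g⟩
      refine ⟨⟨⟨g.1, b.1, c.1, d.1, e.1, f.1⟩, ⟨?_, c.2.symm, e.2.symm⟩, b.2.symm, d.2.symm,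
        f.2.symm⟩, a.1, a.2.symm, g.2.1⟩
      -- `i₄ = i₂` would leave the 4-cycle `i₂ j₂ i₃ j₃`
      rintro rfl
      exact (h4 _ _ _ _ c.1 d.1 e.1 f.1).elim c.2.symm d.2.symm
    · rintro ⟨⟨⟨a₁, a₂, a₃, a₄, a₅, a₆⟩, hi, hj⟩, b, c, d⟩
      exact ⟨⟨b, c.symm⟩, ⟨a₂, hj.1.symm⟩, ⟨a₃, hi.2.1.symm⟩, ⟨a₄, hj.2.1.symm⟩,
        ⟨a₅, hi.2.2.symm⟩, ⟨a₆, hj.2.2.symm⟩, a₁, d, b⟩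
  · rw [if_neg hj, add_zero]
    refine if_congr ?_ rfl rfl
    unfold IsOct
    constructor
    · rintro ⟨a, b, c, d, e, f, g⟩
      exact ⟨⟨a.1, b.1, c.1, d.1, e.1, f.1, g.1, g.2.2⟩,
        ⟨a.2.symm, c.2.symm, e.2.symm, g.2.1.symm⟩, b.2.symm, d.2.symm, f.2.symm, hj⟩
    · rintro ⟨⟨a₁, a₂, a₃, a₄, a₅, a₆, a₇, a₈⟩, hi, hj⟩
      exact ⟨⟨a₁, hi.1.symm⟩, ⟨a₂, hj.1.symm⟩, ⟨a₃, hi.2.1.symm⟩, ⟨a₄, hj.2.1.symm⟩,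
        ⟨a₅, hi.2.2.1.symm⟩, ⟨a₆, hj.2.2.1.symm⟩, a₇, hi.2.2.2.symm, a₈⟩

end

/-- Corollary 4(2), first formula: the number of 8-cycles `N_8` in terms of `N_6` and
`T_4 = trace((H Hᵀ)⁴)`, where `A_8 = (q1+q2+1)³ + q1·q2·(3q1+3q2+2)`. -/
theorem eight_cycles
    (q1 q2 m n : ℕ) (hq1 : 1 ≤ q1) (hq12 : q1 ≤ q2) (hq2 : 2 ≤ q2)
    (hm : 0 < m) (hn : 0 < n)
    (H : Matrix (Fin m) (Fin n) ℝ)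
    (hent : ∀ i j, H i j = 0 ∨ H i j = 1)
    (hcol : ∀ j, Nat.card {i : Fin m // H i j = 1} = q1 + 1)
    (hrow : ∀ i, Nat.card {j : Fin n // H i j = 1} = q2 + 1)
    (hconn : (tannerGraph H).Connected)
    (hg : (6 : ℕ∞) ≤ (tannerGraph H).egirth) :
    numCycles (tannerGraph H) 4 =
      -3 * ((q1 : ℝ) + q2) * numCycles (tannerGraph H) 3
      + (Matrix.trace ((H * H.transpose) ^ 4)
          - ((n * (q1 + 1) : ℕ) : ℝ) *
            (((q1 : ℝ) + q2 + 1) ^ 3 + (q1 : ℝ) * q2 * (3 * q1 + 3 * q2 + 2))) / 8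
    ∧ Matrix.trace ((H * H.transpose) ^ 4) =
        8 * numCycles (tannerGraph H) 4 + 24 * ((q1 : ℝ) + q2) * numCycles (tannerGraph H) 3
        + ((n * (q1 + 1) : ℕ) : ℝ) *
            (((q1 : ℝ) + q2 + 1) ^ 3 + (q1 : ℝ) * q2 * (3 * q1 + 3 * q2 + 2)) := by
  have h4 := no_four_cycle H hg
  have colsum : ∀ j, ∑ i, H i j = (q1 : ℝ) + 1 := by
    intro j
    classical
    have := card_eq_sum (fun i => H i j = 1)
    rw [hcol j] at this
    push_cast at this
    rw [this]
    refine Finset.sum_congr rfl fun i _ => ?_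
    rcases hent i j with h | h <;> simp [h]
  have rowsum : ∀ i, ∑ j, H i j = (q2 : ℝ) + 1 := by
    intro i
    classical
    have := card_eq_sum (fun j => H i j = 1)
    rw [hrow i] at this
    push_cast at this
    rw [this]
    refine Finset.sum_congr rfl fun j _ => ?_
    rcases hent i j with h | h <;> simp [h]
  have edges : (m : ℝ) * (q2 + 1) = n * (q1 + 1) := by
    have := Finset.sum_comm (s := univ) (t := univ) (f := fun i j => H i j)
    simpa only [rowsum, colsum, Finset.sum_const, Finset.card_univ, Fintype.card_fin,
      nsmul_eq_mul] using this
  obtain ⟨t2, t4, t6, t8⟩ := nb_traces H q2 q1 hent colsum rowsum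
  have key := trace_pow_four (q2 : ℝ) q1 (H * Hᵀ)
    (t2.trans (nb_two H)) (t4.trans (nb_four H h4))
  rw [t6, t8, nb_six H h4, nb_eight H q1 hent colsum h4, edges] at key
  have n6 : numCycles (tannerGraph H) 3 = (Nat.card {t // IsHex H t} : ℝ) / 6 := by
    unfold numCycles
    rw [show 2 * 3 = 6 from rfl, cycleCount_six]
    push_cast
    ring
  have n8 : numCycles (tannerGraph H) 4 = (Nat.card {t // IsOct H t} : ℝ) / 8 := by
    unfold numCycles
    rw [show 2 * 4 = 8 from rfl, cycleCount_eight H h4]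
    push_cast
    ring
  rw [n6, n8]
  push_cast
  constructor
  · rw [key]; ring
  · rw [key]; ring
end
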